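/- arXiv:math/0411347 — 2 statements merged into one kernel-verified Lean document; each statement's English description precedes it below -/
import Mathlib

section
/- The integral group cohomology of the commutator subgroup F' of Thompson's group F is infinite cyclic in every even degree and trivial in every odd degree: H^n(F'; ℤ) ≅ ℤ when n is even and H^n(F'; ℤ) = 0 when n is odd. (Additively this is the statement that H^*(F') is a divided polynomial ring Γ(u) on one generator u of degree 2.) -/
/-- The defining relations of Thompson's group `F`. -/
def thompsonRels : Set (FreeGroup ℕ) :=
  {r | ∃ i n : ℕ, i < n ∧
    r = (FreeGroup.of i)⁻¹ * FreeGroup.of n * FreeGroup.of i * (FreeGroup.of (n + 1))⁻¹}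

/-- Thompson's group `F`, defined by its infinite presentation. -/
abbrev ThompsonF : Type := PresentedGroup thompsonRels

/-!
The commutator subgroup `F′` consists of the elements of degree `0` in the group `Y` generated by
the conjugates `yᵢ` of `x₁` by powers of `x₀`, which satisfy `yₙ yᵢ = yᵢ yₙ₊₁` for `i < n`. Normal
forms in `Y` give a free resolution of `ℤ` over `ℤ[Y]` with a basis element `[a₁, …, aₙ]` for every
sequence of integers with gaps `aₖ₊₁ - aₖ ≥ 2`.

Over `F′` the cells of dimension `n + 1` are classified by `n` gaps, the first letter and the
degree. Reading the gap `h + 2` as the element `vʰ(v - v²)` of the ring without unit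
`I = (v - v²)ℤ[v]`, one recognises the equivariant cochains as the Hochschild cochains of `I` with
values in the functions on `ℤ²`, where `v` acts from the left and from the right by the two unit
translations `z` and `y`.

With a unit adjoined, `I` is the coordinate ring of the nodal cubic, and the cohomology is
`2`-periodic because of the matrix factorization attached to the node: the part of the coinduced
bimodule on which `v - v²` acts from the left as `t - t²` is an extension of the bimodule where `v`
acts as `1 - t` by the one where it acts as `t`. It is acyclic as soon as `y - t` and `1 - y - t`
are surjective, so exchanging `t` and `1 - t` shifts the degree by one.
-/

namespace ThompsonF

/-! ### The commutator subgroup inside the group generated by the conjugates of `x₁` -/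

/-- The generators `x₀, x₁, x₂, …` of Thompson's group. -/
def x (n : ℕ) : ThompsonF := PresentedGroup.of n

lemma x_conj {i n : ℕ} (h : i < n) : (x i)⁻¹ * x n * x i = x (n + 1) := by
  have : PresentedGroup.mk thompsonRels ((FreeGroup.of i)⁻¹ * FreeGroup.of n * FreeGroup.of i
      * (FreeGroup.of (n + 1))⁻¹) = 1 :=
    PresentedGroup.one_of_mem ⟨i, n, h, rfl⟩
  simp only [map_mul, map_inv] at this
  exact mul_inv_eq_one.1 this

section lift

variable {G : Type*} [Group G] (f : ℕ → G) (hf : ∀ i n, i < n → (f i)⁻¹ * f n * f i = f (n + 1))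

/-- The universal property of the presentation of Thompson's group. -/
def lift : ThompsonF →* G :=
  PresentedGroup.toGroup (f := f) (by
    rintro r ⟨i, n, hin, rfl⟩
    simp [hf i n hin])

lemma lift_x (n : ℕ) : lift f hf (x n) = f n := PresentedGroup.toGroup.of _

end lift

/-- The conjugates of `x₁` by powers of `x₀`, indexed so that `y n = x n` for all `n ≥ 1`. -/
def y (i : ℤ) : ThompsonF := x 0 ^ (1 - i) * x 1 * x 0 ^ (i - 1)

lemma y_conj (i j : ℤ) : x 0 ^ (-j) * y i * x 0 ^ j = y (i + j) := by
  simp only [y, show 1 - (i + j) = -j + (1 - i) by ring, show i + j - 1 = i - 1 + j by ring,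
    zpow_add, mul_assoc]

lemma y_natCast_add_one (n : ℕ) : y (n + 1) = x (n + 1) := by
  induction n with
  | zero => simp [y]
  | succ n ih =>
    have h := y_conj (n + 1) 1
    rw [ih, zpow_neg, zpow_one, x_conj n.succ_pos] at h
    simp [h]

lemma y_mul_y {i n : ℤ} (h : i < n) : y n * y i = y i * y (n + 1) := by
  obtain ⟨k, rfl⟩ : ∃ k : ℕ, n = i + k + 1 := ⟨(n - i - 1).toNat, by omega⟩
  have y_eq (m : ℕ) : y (i + m) = x 0 ^ (-(i - 1)) * x (m + 1) * x 0 ^ (i - 1) := by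
    rw [← y_natCast_add_one, y_conj]
    congr 1
    ring
  have hi := y_eq 0
  have hn := y_eq (k + 1)
  have hn' := y_eq (k + 2)
  push_cast at hi hn hn'
  rw [add_zero] at hi
  rw [hi, show i + k + 1 = i + (k + 1) by ring, hn, show i + (k + 1) + 1 = i + (k + 2 : ℤ) by ring,
    hn', ← x_conj (show 1 < k + 1 + 1 by omega)]
  group

/-- The homomorphism `F → ℤ` counting the generators `x₁, x₂, …`. -/
def degree : ThompsonF →* Multiplicative ℤ :=
  lift (fun n => if n = 0 then 1 else .ofAdd 1) fun i n h => by
    by_cases hi : i = 0 <;> simp [hi, show n ≠ 0 by omega]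

/-- The homomorphism `F → ℤ` counting the generator `x₀`. -/
def degreeZero : ThompsonF →* Multiplicative ℤ :=
  lift (fun n => if n = 0 then .ofAdd 1 else 1) fun i n h => by
    by_cases hi : i = 0 <;> simp [hi, show n ≠ 0 by omega]

lemma degree_y (i : ℤ) : degree (y i) = .ofAdd 1 := by
  simp [y, degree, lift_x]

lemma degreeZero_y (i : ℤ) : degreeZero (y i) = 1 := by
  simp [y, degreeZero, lift_x, ← zpow_add]

/-- The subgroup of `F` generated by the `y i`; it is the kernel of `degreeZero`. -/
def Y : Subgroup ThompsonF := Subgroup.closure (Set.range y)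

lemma y_mem_Y (i : ℤ) : y i ∈ Y := Subgroup.subset_closure ⟨i, rfl⟩

lemma x_zero_zpow_conj_mem_Y (j : ℤ) {k : ThompsonF} (hk : k ∈ Y) :
    x 0 ^ (-j) * k * x 0 ^ j ∈ Y := by
  induction hk using Subgroup.closure_induction with
  | mem g hg => obtain ⟨i, rfl⟩ := hg; exact y_conj i j ▸ y_mem_Y _
  | one => simp [Y.one_mem]
  | mul a b _ _ ha hb => convert Y.mul_mem ha hb using 1; group
  | inv a _ ha => convert Y.inv_mem ha using 1; group

lemma exists_eq_mul_x_zero_zpow (g : ThompsonF) : ∃ k ∈ Y, ∃ j : ℤ, g = k * x 0 ^ j := by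
  have hg : g ∈ Subgroup.closure (Set.range (PresentedGroup.of (rels := thompsonRels))) := by
    rw [PresentedGroup.closure_range_of]; trivial
  induction hg using Subgroup.closure_induction with
  | mem g hg =>
    obtain ⟨_ | n, rfl⟩ := hg
    · exact ⟨1, Y.one_mem, 1, by simp [x]⟩
    · exact ⟨y (n + 1), y_mem_Y _, 0, by simp [y_natCast_add_one, x]⟩
  | one => exact ⟨1, Y.one_mem, 0, by simp⟩
  | mul a b _ _ ha hb =>
    obtain ⟨k, hk, j, rfl⟩ := ha
    obtain ⟨k', hk', j', rfl⟩ := hb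
    exact ⟨_, Y.mul_mem hk (x_zero_zpow_conj_mem_Y (-j) hk'), j + j', by group⟩
  | inv a _ ha =>
    obtain ⟨k, hk, j, rfl⟩ := ha
    exact ⟨_, x_zero_zpow_conj_mem_Y j (Y.inv_mem hk), -j, by group⟩

lemma degreeZero_eq_one {k : ThompsonF} (hk : k ∈ Y) : degreeZero k = 1 := by
  have : Y ≤ degreeZero.ker := by
    rw [Y, Subgroup.closure_le]; rintro _ ⟨i, rfl⟩; exact degreeZero_y i
  exact this hk

lemma abelianization_of_eq {k : ThompsonF} (hk : k ∈ Y) :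
    Abelianization.of k = Abelianization.of (x 1) ^ (degree k).toAdd := by
  induction hk using Subgroup.closure_induction with
  | mem g hg =>
    obtain ⟨i, rfl⟩ := hg
    rw [degree_y, toAdd_ofAdd, zpow_one, y, map_mul, map_mul, map_zpow, map_zpow, mul_right_comm,
      ← zpow_add]
    simp
  | one => simp
  | mul a b _ _ ha hb => rw [map_mul, ha, hb, ← zpow_add]; simp
  | inv a _ ha => rw [map_inv, ha, map_inv]; simp

lemma mem_commutator_iff (g : ThompsonF) : g ∈ commutator ThompsonF ↔ g ∈ Y ∧ degree g = 1 := by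
  constructor
  · intro hg
    refine ⟨?_, Abelianization.commutator_subset_ker degree hg⟩
    have h0 : degreeZero g = 1 := Abelianization.commutator_subset_ker degreeZero hg
    obtain ⟨k, hk, j, rfl⟩ := exists_eq_mul_x_zero_zpow g
    have hx : degreeZero (x 0) = .ofAdd 1 := by simp [degreeZero, lift_x]
    rw [map_mul, degreeZero_eq_one hk, map_zpow, one_mul, hx, ← ofAdd_zsmul, ofAdd_eq_one] at h0
    have hj : j = 0 := by simpa using h0
    simpa [hj] using hk
  · rintro ⟨hk, h⟩
    rw [← Abelianization.ker_of, MonoidHom.mem_ker, abelianization_of_eq hk, h]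
    simp

/-! ### Positive elements -/

/-- The generator `y i` as an element of `Y`. -/
def gen (i : ℤ) : Y := ⟨y i, y_mem_Y i⟩

lemma gen_mul_gen {i n : ℤ} (h : i < n) : gen n * gen i = gen i * gen (n + 1) :=
  Subtype.ext (y_mul_y h)

/-- The degree of an element of `Y`: every generator `gen i` has degree `1`. -/
def deg (g : Y) : ℤ := (degree g).toAdd

lemma deg_mul (a b : Y) : deg (a * b) = deg a + deg b := by simp [deg]

lemma deg_inv (a : Y) : deg a⁻¹ = -deg a := by simp [deg]

lemma deg_zpow (a : Y) (n : ℤ) : deg (a ^ n) = n * deg a := by simp [deg]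

lemma deg_gen (i : ℤ) : deg (gen i) = 1 := by simp [deg, gen, degree_y]

lemma deg_one : deg 1 = 0 := by simp [deg]

/-- The positive submonoid on the generators `gen j`, `j ≥ i`. -/
def positiveFrom (i : ℤ) : Submonoid Y := Submonoid.closure (gen '' Set.Ici i)

/-- The submonoid of `Y` of products of generators. -/
def positive : Submonoid Y := Submonoid.closure (Set.range gen)

lemma positiveFrom_anti : Antitone positiveFrom := fun _ _ h =>
  Submonoid.closure_mono (Set.image_mono (Set.Ici_subset_Ici.2 h))

lemma gen_mem_positiveFrom {i j : ℤ} (h : i ≤ j) : gen j ∈ positiveFrom i :=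
  Submonoid.subset_closure ⟨j, h, rfl⟩

lemma gen_mem_positive (j : ℤ) : gen j ∈ positive := Submonoid.subset_closure ⟨j, rfl⟩

lemma positiveFrom_le_positive (i : ℤ) : positiveFrom i ≤ positive :=
  Submonoid.closure_mono (Set.image_subset_range _ _)

lemma deg_nonneg {p : Y} (hp : p ∈ positive) : 0 ≤ deg p := by
  induction hp using Submonoid.closure_induction_left with
  | one => exact deg_one.ge
  | mul_left g hg q _ ih => obtain ⟨j, rfl⟩ := hg; rw [deg_mul, deg_gen]; omega

lemma positive_cases {p : Y} (hp : p ∈ positive) :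
    p = 1 ∨ ∃ i, ∃ q ∈ positiveFrom i, p = gen i * q := by
  induction hp using Submonoid.closure_induction_left with
  | one => exact .inl rfl
  | mul_left g hg q _ ih =>
    obtain ⟨j, rfl⟩ := hg
    right
    rcases ih with rfl | ⟨i, q, hq, rfl⟩
    · exact ⟨j, 1, one_mem _, rfl⟩
    · rcases le_or_gt j i with h | h
      · exact ⟨j, _, mul_mem (gen_mem_positiveFrom h) (positiveFrom_anti h hq), rfl⟩
      · exact ⟨i, _, mul_mem (gen_mem_positiveFrom (show i ≤ j + 1 by omega)) hq, by
          rw [← mul_assoc, gen_mul_gen h, mul_assoc]⟩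

lemma exists_inv_gen_mul_mul_mem_positive {p : Y} (hp : p ∈ positive) (i : ℤ) :
    ∃ q ∈ positive, (gen i)⁻¹ * p * q ∈ positive := by
  induction hp using Submonoid.closure_induction_left generalizing i with
  | one => exact ⟨gen i, gen_mem_positive i, by simp⟩
  | mul_left g hg p hp ih =>
    obtain ⟨n, rfl⟩ := hg
    rcases lt_trichotomy i n with h | rfl | h
    · obtain ⟨q, hq, hpq⟩ := ih i
      have hcomm : (gen i)⁻¹ * gen n = gen (n + 1) * (gen i)⁻¹ := by
        rw [inv_mul_eq_iff_eq_mul, ← mul_assoc, ← gen_mul_gen h, mul_inv_cancel_right]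
      exact ⟨q, hq, by
        simpa only [← mul_assoc, hcomm] using mul_mem (gen_mem_positive (n + 1)) hpq⟩
    · exact ⟨1, one_mem _, by rwa [inv_mul_cancel_left, mul_one]⟩
    · obtain ⟨q, hq, hpq⟩ := ih (i + 1)
      have hcomm : (gen i)⁻¹ * gen n = gen n * (gen (i + 1))⁻¹ := by
        rw [inv_mul_eq_iff_eq_mul, ← mul_assoc, gen_mul_gen h, mul_inv_cancel_right]
      exact ⟨q, hq, by simpa only [← mul_assoc, hcomm] using mul_mem (gen_mem_positive n) hpq⟩

lemma closure_range_gen : Subgroup.closure (Set.range gen) = ⊤ := by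
  rw [← (Subgroup.map_injective Y.subtype_injective).eq_iff, MonoidHom.map_closure,
    ← Set.range_comp, ← MonoidHom.range_eq_map, Y.range_subtype]
  rfl

lemma exists_mul_mem_positive (g : Y) : ∃ q ∈ positive, g * q ∈ positive := by
  have hg : g ∈ Subgroup.closure (Set.range gen) := closure_range_gen ▸ Subgroup.mem_top g
  induction hg using Subgroup.closure_induction_left with
  | one => exact ⟨1, one_mem _, by simp⟩
  | mul_left a ha g _ ih =>
    obtain ⟨i, rfl⟩ := ha
    obtain ⟨q, hq, h⟩ := ih
    exact ⟨q, hq, mul_assoc (gen i) g q ▸ mul_mem (gen_mem_positive i) h⟩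
  | inv_mul_cancel a ha g _ ih =>
    obtain ⟨i, rfl⟩ := ha
    obtain ⟨q, hq, h⟩ := ih
    obtain ⟨q', hq', h'⟩ := exists_inv_gen_mul_mul_mem_positive h i
    exact ⟨q * q', mul_mem hq hq', by simpa only [mul_assoc] using h'⟩

lemma exists_forall_mul_mem_positive (S : Finset Y) :
    ∃ h ∈ positive, ∀ g ∈ S, g * h ∈ positive := by
  classical
  induction S using Finset.induction_on with
  | empty => exact ⟨1, one_mem _, by simp⟩
  | insert a S _ ih =>
    obtain ⟨h, hh, hS⟩ := ih
    obtain ⟨q, hq, hahq⟩ := exists_mul_mem_positive (a * h)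
    refine ⟨h * q, mul_mem hh hq, fun g hg => ?_⟩
    rw [← mul_assoc]
    rcases Finset.mem_insert.1 hg with rfl | hg
    · exact hahq
    · exact mul_mem (hS g hg) hq

/-! ### The piecewise linear action and uniqueness of normal forms -/

/-- The homeomorphism of the line that is the identity on `(-∞, 0]`, has slope `1 / 2` on `[0, 2]`
and is the translation by `-1` on `[2, ∞)`. -/
def halve : Equiv.Perm ℚ where
  toFun u := u - max 0 (min 1 (u / 2))
  invFun u := u + max 0 (min 1 u)
  left_inv u := by grind
  right_inv u := by grind

lemma halve_apply (u : ℚ) : halve u = u - max 0 (min 1 (u / 2)) := rfl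

/-- The conjugate of `halve` by the translation by `n`. -/
def halveAt (n : ℤ) : Equiv.Perm ℚ := .addRight (n : ℚ) * halve * .addRight (-n : ℚ)

lemma halveAt_apply (n : ℤ) (u : ℚ) : halveAt n u = u - max 0 (min 1 ((u - n) / 2)) := by
  simp [halveAt, halve_apply, sub_eq_add_neg, add_right_comm]

lemma halveAt_le (n : ℤ) (u : ℚ) : halveAt n u ≤ u := by
  rw [halveAt_apply]; grind

lemma halveAt_eq_self {n : ℤ} {u : ℚ} (h : u ≤ n) : halveAt n u = u := by
  rw [halveAt_apply]; grind

lemma halveAt_lt {n : ℤ} {u : ℚ} (h : n < u) : halveAt n u < u := by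
  rw [halveAt_apply]; grind

lemma halveAt_mul_halveAt {i n : ℤ} (h : i < n) :
    halveAt n * halveAt i = halveAt i * halveAt (n + 1) := by
  have h' : (i : ℚ) + 1 ≤ n := by exact_mod_cast h
  ext u
  simp only [Equiv.Perm.mul_apply, halveAt_apply]
  push_cast
  grind

/-- The action of Thompson's group on the rational line by piecewise linear homeomorphisms. -/
def lineAction : ThompsonF →* Equiv.Perm ℚ :=
  lift (fun n => if n = 0 then .addRight (-1) else halveAt n) fun i n h => by
    rw [if_neg (show n ≠ 0 by omega), if_neg (show n + 1 ≠ 0 by omega), mul_assoc,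
      inv_mul_eq_iff_eq_mul]
    split_ifs with hi
    · ext u
      simp only [Equiv.Perm.mul_apply, Equiv.coe_addRight, halveAt_apply]
      push_cast
      ring_nf
    · exact_mod_cast halveAt_mul_halveAt (by omega)

lemma lineAction_gen (i : ℤ) : lineAction (gen i) = halveAt i := by
  have h0 : lineAction (x 0) = .addRight (-1) := by simp [lineAction, lift_x]
  have h1 : lineAction (x 1) = halveAt 1 := by simp [lineAction, lift_x]
  ext u
  simp only [gen, y, map_mul, map_zpow, h0, h1, Equiv.zsmul_addRight, smul_neg, zsmul_eq_mul,
    Int.cast_sub, Int.cast_one, mul_one, neg_sub, Equiv.Perm.mul_apply, Equiv.coe_addRight,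
    halveAt_apply]
  ring_nf

lemma lineAction_le {p : Y} (hp : p ∈ positive) (u : ℚ) : lineAction p u ≤ u := by
  induction hp using Submonoid.closure_induction_left with
  | one => simp
  | mul_left g hg q _ ih =>
    obtain ⟨j, rfl⟩ := hg
    rw [Subgroup.coe_mul, map_mul, lineAction_gen, Equiv.Perm.mul_apply]
    exact (halveAt_le j _).trans ih

lemma lineAction_eq_self {j : ℤ} {p : Y} (hp : p ∈ positiveFrom j) {u : ℚ} (hu : u ≤ j) :
    lineAction p u = u := by
  induction hp using Submonoid.closure_induction_left with
  | one => simp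
  | mul_left g hg q _ ih =>
    obtain ⟨k, hk, rfl⟩ := hg
    rw [Subgroup.coe_mul, map_mul, lineAction_gen, Equiv.Perm.mul_apply, ih]
    exact halveAt_eq_self (hu.trans (by exact_mod_cast hk))

/- If `gen i * p` lay in `positiveFrom (i + 1)`, it would fix `i + 1`; but `p` does not increase
`i + 1`, and `gen i` strictly decreases every point above `i`. -/
lemma gen_mul_notMem_positiveFrom {i : ℤ} {p : Y} (hp : p ∈ positive) :
    gen i * p ∉ positiveFrom (i + 1) := by
  intro h
  have hfix := lineAction_eq_self h (u := i + 1) (by push_cast; rfl)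
  rw [Subgroup.coe_mul, map_mul, lineAction_gen, Equiv.Perm.mul_apply] at hfix
  have hp_le := lineAction_le hp (i + 1)
  rcases le_or_gt (lineAction p (i + 1)) i with hle | hlt
  · rw [halveAt_eq_self hle] at hfix
    linarith
  · linarith [halveAt_lt hlt]

lemma gen_mul_inj {i j : ℤ} {p q : Y} (hp : p ∈ positiveFrom i) (hq : q ∈ positiveFrom j)
    (h : gen i * p = gen j * q) : i = j ∧ p = q := by
  have index_not_lt {i j : ℤ} {p q : Y} (hp : p ∈ positiveFrom i) (hq : q ∈ positiveFrom j)
      (h : gen i * p = gen j * q) : ¬ i < j := fun hlt =>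
    gen_mul_notMem_positiveFrom (positiveFrom_le_positive _ hp)
      (h ▸ mul_mem (gen_mem_positiveFrom (by omega)) (positiveFrom_anti (by omega) hq))
  obtain rfl : i = j :=
    le_antisymm (le_of_not_gt (index_not_lt hq hp h.symm)) (le_of_not_gt (index_not_lt hp hq h))
  exact ⟨rfl, mul_left_cancel h⟩

end ThompsonF

/-! ### A free resolution over the conjugates of `x₁` -/

lemma supported_le_of_single_mem {α : Type*} {S : Set α} {N : Submodule ℤ (α →₀ ℤ)}
    (h : ∀ c ∈ S, Finsupp.single c 1 ∈ N) : Finsupp.supported ℤ ℤ S ≤ N := by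
  rw [Finsupp.supported_eq_span_single, Submodule.span_le]
  rintro _ ⟨c, hc, rfl⟩
  exact h c hc

lemma lmapDomain_mem_supported {α β : Type*} {f : α → β} {S : Set α} {T : Set β}
    (h : Set.MapsTo f S T) {z : α →₀ ℤ} (hz : z ∈ Finsupp.supported ℤ ℤ S) :
    Finsupp.lmapDomain ℤ ℤ f z ∈ Finsupp.supported ℤ ℤ T := by
  refine Finsupp.supported_mono h.image_subset ?_
  rw [← Finsupp.lmapDomain_supported]
  exact Submodule.mem_map_of_mem hz

lemma eq_zero_of_triangular {α β : Type*} {S : Set α} {d : (α →₀ ℤ) →ₗ[ℤ] (β →₀ ℤ)} (w : α → ℤ)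
    (lead : α → β) (h_lead : ∀ c ∈ S, d (Finsupp.single c 1) (lead c) ≠ 0)
    (h : ∀ c ∈ S, ∀ c' ∈ S, c' ≠ c → w c' ≤ w c → d (Finsupp.single c' 1) (lead c) = 0)
    {z : α →₀ ℤ} (hz : z ∈ Finsupp.supported ℤ ℤ S) (hd : d z = 0) : z = 0 := by
  by_contra hne
  obtain ⟨c, hc, hmax⟩ := z.support.exists_max_image w (Finsupp.support_nonempty_iff.2 hne)
  have hsum : d z (lead c) = ∑ c' ∈ z.support, z c' * d (Finsupp.single c' 1) (lead c) := by
    conv_lhs => rw [← Finsupp.sum_single z, Finsupp.sum, map_sum, Finsupp.finsetSum_apply]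
    refine Finset.sum_congr rfl fun c' _ => ?_
    rw [← mul_one (z c'), ← smul_eq_mul, ← Finsupp.smul_single, map_smul]
    simp
  rw [hd, Finset.sum_eq_single_of_mem c hc fun c' hc' hne => by
    rw [h c (hz hc) c' (hz hc') hne (hmax c' hc'), mul_zero]] at hsum
  exact mul_ne_zero (Finsupp.mem_support_iff.1 hc) (h_lead c (hz hc)) hsum.symm

namespace ThompsonF

noncomputable section

/-- The basis elements `κ · [a₁, …, aₙ]` of the resolution, encoded as pairs `([a₁, …, aₙ], κ)`. -/
abbrev Cell : Type := List ℤ × Y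

/-- Integral chains on cells of arbitrary dimension. -/
abbrev Chain : Type := Cell →₀ ℤ

/-- Prepending the letter `a` to a cell. -/
def cone (a : ℤ) : Chain →ₗ[ℤ] Chain := Finsupp.lmapDomain ℤ ℤ (Prod.map (a :: ·) id)

/-- Moving `y a` past a cell: each later letter is lowered by one. -/
def push (a : ℤ) : Chain →ₗ[ℤ] Chain :=
  Finsupp.lmapDomain ℤ ℤ (Prod.map (List.map (· - 1)) (gen a * ·))

/-- The action of `Y` on chains by right translation. -/
def translate (h : Y) : Chain →ₗ[ℤ] Chain := Finsupp.lmapDomain ℤ ℤ (Prod.map id (· * h))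

@[simp]
lemma cone_single (a : ℤ) (l : List ℤ) (κ : Y) (k : ℤ) :
    cone a (.single (l, κ) k) = .single (a :: l, κ) k := by
  simp [cone]

@[simp]
lemma push_single (a : ℤ) (l : List ℤ) (κ : Y) (k : ℤ) :
    push a (.single (l, κ) k) = .single (l.map (· - 1), gen a * κ) k := by
  simp [push]

@[simp]
lemma translate_single (h : Y) (l : List ℤ) (κ : Y) (k : ℤ) :
    translate h (.single (l, κ) k) = .single (l, κ * h) k := by
  simp [translate]

/-- The boundary of a cell. -/
def bdryCell : List ℤ → Y → Chain
  | [], _ => 0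
  | a :: l, κ => .single (l, κ) 1 - .single (l.map (· - 1), gen a * κ) 1 - cone a (bdryCell l κ)

/-- The boundary operator. It squares to zero only on gapped cells. -/
def bdry : Chain →ₗ[ℤ] Chain :=
  Finsupp.lsum ℤ fun c => LinearMap.toSpanSingleton ℤ Chain (bdryCell c.1 c.2)

@[simp]
lemma bdry_single (l : List ℤ) (κ : Y) (k : ℤ) :
    bdry (.single (l, κ) k) = k • bdryCell l κ := by
  simp [bdry]

/-- Any two entries differ by at least two, in increasing order. -/
def Gapped (l : List ℤ) : Prop := l.Pairwise fun a b => a + 2 ≤ b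

lemma gapped_cons {a : ℤ} {l : List ℤ} :
    Gapped (a :: l) ↔ (∀ b ∈ l, a + 2 ≤ b) ∧ Gapped l := List.pairwise_cons

lemma Gapped.map_add {l : List ℤ} (hl : Gapped l) (k : ℤ) : Gapped (l.map (· + k)) :=
  List.pairwise_map.2 (hl.imp fun h => by omega)

lemma Gapped.head_le {a : ℤ} {l : List ℤ} (hl : Gapped (a :: l)) : ∀ b ∈ a :: l, a ≤ b := by
  refine List.forall_mem_cons.2 ⟨le_rfl, fun b hb => ?_⟩
  have := (gapped_cons.1 hl).1 b hb
  omega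

lemma Gapped.add_one_le {a : ℤ} {l : List ℤ} (hl : Gapped (a :: l)) :
    ∀ b ∈ l.map (· - 1), a + 1 ≤ b := by
  refine List.forall_mem_map.2 fun b hb => ?_
  have := (gapped_cons.1 hl).1 b hb
  omega

/-- The `n`-chains of the resolution. -/
def chains (n : ℕ) : Submodule ℤ Chain :=
  Finsupp.supported ℤ ℤ {c | Gapped c.1 ∧ c.1.length = n}

lemma single_mem_chains {l : List ℤ} (hl : Gapped l) (κ : Y) (k : ℤ) :
    .single (l, κ) k ∈ chains l.length :=
  Finsupp.single_mem_supported _ _ ⟨hl, rfl⟩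

lemma bdryCell_mem {a : ℤ} {l : List ℤ} (hl : Gapped l) (ha : ∀ b ∈ l, a ≤ b) (κ : Y) :
    bdryCell l κ ∈ Finsupp.supported ℤ ℤ {c : Cell | Gapped c.1 ∧ c.1.length + 1 = l.length ∧
      (∀ b ∈ c.1, a ≤ b) ∧ ∃ m ∈ positiveFrom a, c.2 = m * κ} := by
  induction l generalizing a with
  | nil => exact zero_mem _
  | cons b l ih =>
    obtain ⟨hb, hl'⟩ := gapped_cons.1 hl
    have hab : a ≤ b := ha b List.mem_cons_self
    refine sub_mem (sub_mem ?_ ?_) (lmapDomain_mem_supported ?_ (ih hl' hb))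
    · refine Finsupp.single_mem_supported _ _ ⟨hl', rfl, fun e he => ?_, 1, one_mem _, ?_⟩
      · exact ha e (List.mem_cons_of_mem b he)
      · exact (one_mul κ).symm
    · refine Finsupp.single_mem_supported _ _ ⟨hl'.map_add (-1), by simp, fun e he => ?_,
        gen b, gen_mem_positiveFrom hab, rfl⟩
      have := hl.add_one_le e he
      omega
    · rintro ⟨l', κ'⟩ ⟨hgap, hlen, hge, m, hm, hκ⟩
      refine ⟨gapped_cons.2 ⟨hge, hgap⟩, congrArg (· + 1) hlen, ?_, m, ?_, hκ⟩
      · refine List.forall_mem_cons.2 ⟨hab, fun e he => ?_⟩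
        have := hge e he
        omega
      · exact positiveFrom_anti (show a ≤ b + 2 by omega) hm

lemma bdry_mem_chains {n : ℕ} {z : Chain} (hz : z ∈ chains (n + 1)) : bdry z ∈ chains n := by
  refine supported_le_of_single_mem (N := (chains n).comap bdry) ?_ hz
  rintro ⟨_ | ⟨a, l⟩, κ⟩ ⟨hgap, hlen⟩
  · simp at hlen
  · rw [Submodule.mem_comap, bdry_single, one_smul]
    refine Finsupp.supported_mono ?_ (bdryCell_mem hgap hgap.head_le κ)
    rintro c ⟨hc, hc_len, -⟩
    exact ⟨hc, Nat.succ_injective (hc_len.trans hlen)⟩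

lemma bdry_cone (a : ℤ) (z : Chain) : bdry (cone a z) = z - push a z - cone a (bdry z) := by
  suffices bdry ∘ₗ cone a = .id - push a - cone a ∘ₗ bdry from LinearMap.congr_fun this z
  ext ⟨l, κ⟩ : 2
  simp [bdryCell]

lemma push_cone (a b : ℤ) (z : Chain) : push a (cone b z) = cone (b - 1) (push a z) := by
  suffices push a ∘ₗ cone b = cone (b - 1) ∘ₗ push a from LinearMap.congr_fun this z
  ext ⟨l, κ⟩ : 2
  simp

lemma push_bdryCell {a : ℤ} {l : List ℤ} (hl : ∀ b ∈ l, a + 2 ≤ b) (κ : Y) :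
    push a (bdryCell l κ) = bdryCell (l.map (· - 1)) (gen a * κ) := by
  induction l with
  | nil => exact map_zero _
  | cons b l ih =>
    have hb : a < b - 1 := by have := hl b List.mem_cons_self; omega
    have hcomm : gen a * (gen b * κ) = gen (b - 1) * (gen a * κ) := by
      rw [← mul_assoc, ← mul_assoc, gen_mul_gen hb, sub_add_cancel]
    simp only [List.map_cons, bdryCell, map_sub, push_single, push_cone,
      ih fun e he => hl e (List.mem_cons_of_mem b he), hcomm]

lemma bdry_bdryCell {l : List ℤ} (hl : Gapped l) (κ : Y) : bdry (bdryCell l κ) = 0 := by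
  induction l with
  | nil => exact map_zero _
  | cons a l ih =>
    obtain ⟨ha, hl⟩ := gapped_cons.1 hl
    simp only [bdryCell, map_sub, bdry_single, one_smul, bdry_cone, push_bdryCell ha, ih hl,
      map_zero, sub_zero, sub_self]

lemma bdry_bdry {n : ℕ} {z : Chain} (hz : z ∈ chains n) : bdry (bdry z) = 0 := by
  refine supported_le_of_single_mem (N := LinearMap.ker (bdry ∘ₗ bdry)) ?_ hz
  rintro ⟨l, κ⟩ ⟨hl, -⟩
  simp [bdry_bdryCell hl κ]

/-- The augmentation, meant for `0`-chains. -/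
def augmentation : Chain →ₗ[ℤ] ℤ := Finsupp.lsum ℤ fun _ => LinearMap.id

@[simp]
lemma augmentation_single (c : Cell) (k : ℤ) : augmentation (.single c k) = k := by
  simp [augmentation]

lemma augmentation_bdry {z : Chain} (hz : z ∈ chains 1) : augmentation (bdry z) = 0 := by
  refine supported_le_of_single_mem (N := LinearMap.ker (augmentation ∘ₗ bdry)) ?_ hz
  rintro ⟨l, κ⟩ ⟨-, hl⟩
  obtain ⟨a, rfl⟩ := List.length_eq_one_iff.1 hl
  simp [bdryCell]

lemma translate_bdryCell (h : Y) (l : List ℤ) (κ : Y) :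
    translate h (bdryCell l κ) = bdryCell l (κ * h) := by
  induction l generalizing κ with
  | nil => exact map_zero _
  | cons a l ih =>
    have hcone : translate h ∘ₗ cone a = cone a ∘ₗ translate h := by
      ext ⟨l, κ⟩ : 2
      simp
    have hcone_apply : translate h (cone a (bdryCell l κ)) = cone a (translate h (bdryCell l κ)) :=
      LinearMap.congr_fun hcone _
    simp only [bdryCell, map_sub, translate_single, mul_assoc, hcone_apply, ih]

lemma translate_bdry (h : Y) (z : Chain) : translate h (bdry z) = bdry (translate h z) := by
  suffices translate h ∘ₗ bdry = bdry ∘ₗ translate h from LinearMap.congr_fun this z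
  ext ⟨l, κ⟩ : 2
  simp [translate_bdryCell]

lemma translate_translate (g h : Y) (z : Chain) :
    translate g (translate h z) = translate (h * g) z := by
  suffices translate g ∘ₗ translate h = translate (h * g) from LinearMap.congr_fun this z
  ext ⟨l, κ⟩ : 2
  simp [mul_assoc]

lemma translate_one (z : Chain) : translate 1 z = z := by
  suffices translate 1 = .id from LinearMap.congr_fun this z
  ext ⟨l, κ⟩ : 2
  simp

lemma translate_mem_chains (h : Y) {n : ℕ} {z : Chain} (hz : z ∈ chains n) :
    translate h z ∈ chains n :=
  lmapDomain_mem_supported (f := Prod.map id (· * h)) (fun _ hc => hc) hz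

lemma augmentation_translate (h : Y) (z : Chain) :
    augmentation (translate h z) = augmentation z := by
  suffices augmentation ∘ₗ translate h = augmentation from LinearMap.congr_fun this z
  ext ⟨l, κ⟩
  simp

/-- The cells `([a, …], p)` with `p` a positive word in letters `≥ a`, and `([], 1)`. They span a
complement of the boundaries of positive chains. -/
def IsReduced : Cell → Prop
  | ([], p) => p = 1
  | (a :: _, p) => p ∈ positiveFrom a

/-- The `n`-chains supported on reduced cells. -/
def reduced (n : ℕ) : Submodule ℤ Chain :=
  Finsupp.supported ℤ ℤ {c | (Gapped c.1 ∧ c.1.length = n) ∧ IsReduced c}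

lemma cone_bdryCell_mem_reduced {i : ℤ} {l : List ℤ} (hl : Gapped (i :: l)) {q : Y}
    (hq : q ∈ positiveFrom i) : cone i (bdryCell l q) ∈ reduced l.length := by
  obtain ⟨hi, hl⟩ := gapped_cons.1 hl
  refine lmapDomain_mem_supported ?_ (bdryCell_mem hl hi q)
  rintro ⟨l', _⟩ ⟨hgap, hlen, hge, m, hm, rfl⟩
  exact ⟨⟨gapped_cons.2 ⟨hge, hgap⟩, hlen⟩,
    mul_mem (positiveFrom_anti (by omega) hm) hq⟩

lemma isReduced_or_gapped {l : List ℤ} (hl : Gapped l) {i : ℤ} {q : Y} (hq : q ∈ positiveFrom i) :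
    IsReduced (l, gen i * q) ∨ Gapped (i :: l.map (· + 1)) := by
  rcases l with _ | ⟨a, l⟩
  · exact .inr (gapped_cons.2 ⟨by simp, .nil⟩)
  · rcases le_or_gt a i with h | h
    · exact .inl (mul_mem (gen_mem_positiveFrom h) (positiveFrom_anti h hq))
    · refine .inr (gapped_cons.2 ⟨List.forall_mem_map.2 fun b hb => ?_, hl.map_add 1⟩)
      have := hl.head_le b hb
      omega

lemma exists_single_sub_bdry_mem_reduced {l : List ℤ} {p : Y} (hl : Gapped l) (hp : p ∈ positive) :
    ∃ u ∈ chains (l.length + 1), .single (l, p) 1 - bdry u ∈ reduced l.length := by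
  induction hN : (deg p).toNat using Nat.strong_induction_on generalizing l p with | _ N ih
  have of_isReduced (h : IsReduced (l, p)) :
      ∃ u ∈ chains (l.length + 1), .single (l, p) 1 - bdry u ∈ reduced l.length := by
    refine ⟨0, zero_mem _, ?_⟩
    rw [map_zero, sub_zero]
    exact Finsupp.single_mem_supported _ _ ⟨⟨hl, rfl⟩, h⟩
  rcases positive_cases hp with rfl | ⟨i, q, hq, rfl⟩
  · refine of_isReduced ?_
    cases l
    · rfl
    · exact one_mem _
  rcases isReduced_or_gapped hl hq with h | hgap
  · exact of_isReduced h
  have hq_pos := positiveFrom_le_positive i hq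
  have hlt : (deg q).toNat < N := by
    rw [← hN, deg_mul, deg_gen]
    have := deg_nonneg hq_pos
    omega
  obtain ⟨u, hu, hred⟩ := ih _ hlt (hl.map_add 1) hq_pos rfl
  have hcone := cone_bdryCell_mem_reduced hgap hq
  have hi_mem := single_mem_chains hgap q 1
  rw [List.length_cons] at hi_mem
  rw [List.length_map] at hu hred hcone hi_mem
  refine ⟨u - .single (i :: l.map (· + 1), q) 1, sub_mem hu hi_mem, ?_⟩
  convert sub_mem hred hcone using 1
  simp only [map_sub, bdry_single, one_smul, bdryCell, List.map_map, Function.comp_def,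
    add_sub_cancel_right, List.map_id']
  abel

lemma exists_sub_bdry_mem_reduced {n : ℕ} {z : Chain}
    (hz : z ∈ Finsupp.supported ℤ ℤ {c : Cell | (Gapped c.1 ∧ c.1.length = n) ∧ c.2 ∈ positive}) :
    ∃ u ∈ chains (n + 1), z - bdry u ∈ reduced n := by
  suffices z ∈ reduced n ⊔ (chains (n + 1)).map bdry by
    obtain ⟨v, hv, _, ⟨u, hu, rfl⟩, rfl⟩ := Submodule.mem_sup.1 this
    exact ⟨u, hu, by simpa using hv⟩
  refine supported_le_of_single_mem ?_ hz
  rintro ⟨l, p⟩ ⟨⟨hl, rfl⟩, hp⟩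
  obtain ⟨u, hu, hv⟩ := exists_single_sub_bdry_mem_reduced hl hp
  exact Submodule.mem_sup.2 ⟨_, hv, _, Submodule.mem_map_of_mem hu, sub_add_cancel _ _⟩

lemma exists_translate_sub_bdry_mem_reduced {n : ℕ} {z : Chain} (hz : z ∈ chains n) :
    ∃ h, ∃ u ∈ chains (n + 1), translate h z - bdry u ∈ reduced n := by
  classical
  obtain ⟨h, -, hh⟩ := exists_forall_mul_mem_positive (z.support.image Prod.snd)
  refine ⟨h, exists_sub_bdry_mem_reduced ?_⟩
  refine lmapDomain_mem_supported (f := Prod.map id (· * h)) (S := ↑z.support)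
    (fun c hc => ?_) fun _ hc => hc
  have hgap := hz hc
  exact ⟨hgap, hh _ (Finset.mem_image_of_mem _ hc)⟩

/-- The leading term of the boundary of a reduced cell. -/
def lead (c : Cell) : Cell := (c.1.tail.map (· - 1), gen c.1.headI * c.2)

lemma lead_ne {a : ℤ} {l t : List ℤ} {p q : Y} (h : deg q ≤ deg p) :
    (t, q) ≠ lead (a :: l, p) := by
  intro heq
  have := congrArg (fun c : Cell => deg c.2) heq
  simp only [lead, deg_mul, deg_gen] at this
  omega

lemma lead_inj {a b : ℤ} {l t : List ℤ} {p q : Y} (hp : p ∈ positiveFrom a)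
    (hq : q ∈ positiveFrom b) (h : lead (b :: t, q) = lead (a :: l, p)) :
    ((b :: t, q) : Cell) = (a :: l, p) := by
  obtain ⟨rfl, rfl⟩ := gen_mul_inj hq hp (congrArg Prod.snd h)
  have := List.map_injective_iff.2 (sub_left_injective (b := (1 : ℤ))) (congrArg Prod.fst h)
  simp_all

lemma cone_bdryCell_apply_lead {a b : ℤ} {l t : List ℤ} {p q : Y} (hl : Gapped (a :: l))
    (ht : Gapped (b :: t)) (hp : p ∈ positive) (hq : q ∈ positiveFrom b) :
    cone b (bdryCell t q) (lead (a :: l, p)) = 0 := by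
  by_contra hne
  obtain ⟨-, hmem⟩ := cone_bdryCell_mem_reduced ht hq (Finsupp.mem_support_iff.2 hne)
  rcases l with _ | ⟨e, l⟩
  · exact gen_mul_notMem_positiveFrom hp (hmem ▸ one_mem _)
  · exact gen_mul_notMem_positiveFrom hp
      (positiveFrom_anti (hl.add_one_le _ List.mem_cons_self) hmem)

lemma bdryCell_apply_lead {a b : ℤ} {l t : List ℤ} {p q : Y} (hl : Gapped (a :: l))
    (ht : Gapped (b :: t)) (hp : p ∈ positiveFrom a) (hq : q ∈ positiveFrom b)
    (hdeg : deg q ≤ deg p) :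
    bdryCell (b :: t) q (lead (a :: l, p)) =
      -Finsupp.single (lead (b :: t, q)) 1 (lead (a :: l, p)) := by
  rw [bdryCell, Finsupp.sub_apply, Finsupp.sub_apply,
    cone_bdryCell_apply_lead hl ht (positiveFrom_le_positive a hp) hq,
    Finsupp.single_eq_of_ne (lead_ne hdeg).symm, sub_zero, zero_sub]
  rfl

lemma eq_zero_of_mem_reduced {n : ℕ} {z : Chain} (hz : z ∈ reduced (n + 1)) (hd : bdry z = 0) :
    z = 0 := by
  refine eq_zero_of_triangular (fun c => deg c.2) lead ?_ ?_ hz hd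
  · rintro ⟨_ | ⟨a, l⟩, p⟩ ⟨⟨hl, hlen⟩, hp⟩
    · simp at hlen
    · simp [bdryCell_apply_lead hl hl hp hp le_rfl]
  · rintro ⟨_ | ⟨a, l⟩, p⟩ ⟨⟨hl, hlen⟩, hp⟩ ⟨_ | ⟨b, t⟩, q⟩ ⟨⟨ht, htlen⟩, hq⟩ hne hdeg
    any_goals simp at hlen htlen
    rw [bdry_single, one_smul, bdryCell_apply_lead hl ht hp hq hdeg,
      Finsupp.single_eq_of_ne fun h => hne (lead_inj hp hq h.symm), neg_zero]

lemma exists_bdry_eq {n : ℕ} {z : Chain} (hz : z ∈ chains (n + 1)) (hd : bdry z = 0) :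
    ∃ u ∈ chains (n + 2), bdry u = z := by
  obtain ⟨h, u, hu, hred⟩ := exists_translate_sub_bdry_mem_reduced hz
  have hzero := eq_zero_of_mem_reduced hred <| by
    rw [map_sub, bdry_bdry hu, ← translate_bdry, hd, map_zero, sub_zero]
  refine ⟨translate h⁻¹ u, translate_mem_chains _ hu, ?_⟩
  rw [← translate_bdry, ← sub_eq_zero.1 hzero, translate_translate, mul_inv_cancel, translate_one]

lemma eq_zero_of_mem_reduced_zero {z : Chain} (hz : z ∈ reduced 0) (ha : augmentation z = 0) :
    z = 0 := by
  have hle : {c : Cell | (Gapped c.1 ∧ c.1.length = 0) ∧ IsReduced c} ⊆ {([], 1)} := by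
    rintro ⟨l, p⟩ ⟨⟨-, hlen⟩, hp⟩
    obtain rfl := List.length_eq_zero_iff.1 hlen
    exact congrArg (Prod.mk []) hp
  obtain ⟨k, rfl⟩ := Finsupp.support_subset_singleton'.1
    fun c hc => Finset.mem_singleton.2 (hle (hz hc))
  rw [augmentation_single] at ha
  rw [ha, Finsupp.single_zero]

lemma exists_bdry_eq_of_augmentation_eq_zero {z : Chain} (hz : z ∈ chains 0)
    (ha : augmentation z = 0) : ∃ u ∈ chains 1, bdry u = z := by
  obtain ⟨h, u, hu, hred⟩ := exists_translate_sub_bdry_mem_reduced hz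
  have hzero := eq_zero_of_mem_reduced_zero hred <| by
    rw [map_sub, augmentation_bdry hu, augmentation_translate, ha, sub_zero]
  refine ⟨translate h⁻¹ u, translate_mem_chains _ hu, ?_⟩
  rw [← translate_bdry, ← sub_eq_zero.1 hzero, translate_translate, mul_inv_cancel, translate_one]

end

end ThompsonF

/-! ### Bimodules over the ideal of the node -/

/-- Let `I` be the ideal of `ℤ[v]` generated by `v - v²`, regarded as a ring without unit. It has
the basis `vʰ(v - v²)`, where `h` runs over `ℕ`, and this structure is an `I`-bimodule structure
given by the left and right actions `L h` and `R h` of the basis elements. -/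
structure NodalBimodule (V : Type*) [AddCommGroup V] where
  L : ℕ → Module.End ℤ V
  R : ℕ → Module.End ℤ V
  L_L : ∀ h g m, L h (L g m) = L (h + g + 1) m - L (h + g + 2) m
  R_R : ∀ h g m, R h (R g m) = R (h + g + 1) m - R (h + g + 2) m
  L_R : ∀ h g m, L h (R g m) = R g (L h m)

/-- The functions of `n` natural numbers, in curried form. -/
def Cochains (V : Type*) : ℕ → Type _
  | 0 => V
  | n + 1 => ℕ → Cochains V n

instance Cochains.addCommGroup (V : Type*) [AddCommGroup V] : ∀ n, AddCommGroup (Cochains V n)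
  | 0 => inferInstanceAs (AddCommGroup V)
  | n + 1 => letI := Cochains.addCommGroup V n; inferInstanceAs (AddCommGroup (ℕ → Cochains V n))

lemma nonempty_linearEquiv_of_ker_eq {R E X Y : Type*} [Ring R] [AddCommGroup E] [AddCommGroup X]
    [AddCommGroup Y] [Module R E] [Module R X] [Module R Y] {f : E →ₗ[R] X} {g : E →ₗ[R] Y}
    (hf : Function.Surjective f) (hg : Function.Surjective g)
    (h : LinearMap.ker f = LinearMap.ker g) : Nonempty (X ≃ₗ[R] Y) :=
  ⟨(f.quotKerEquivOfSurjective hf).symm ≪≫ₗ Submodule.quotEquivOfEq _ _ h ≪≫ₗ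
    g.quotKerEquivOfSurjective hg⟩

namespace NodalBimodule

variable {V W U : Type*} [AddCommGroup V] [AddCommGroup W] [AddCommGroup U]
  {A : NodalBimodule V} {B : NodalBimodule W} {C : NodalBimodule U}
  {f : V →ₗ[ℤ] W} {i : V →ₗ[ℤ] W} {p : W →ₗ[ℤ] U}

/-- The bimodule of additive maps from `I` to a bimodule: the Hochschild cohomology of the latter
in degree `n + 1` is that of the former in degree `n`. -/
def shift (A : NodalBimodule V) : NodalBimodule (ℕ → V) where
  L h := (A.L h).compLeft ℕ
  R h := LinearMap.pi fun g =>
    (LinearMap.proj (h + g + 1) : (ℕ → V) →ₗ[ℤ] V) - LinearMap.proj (h + g + 2) -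
      A.R g ∘ₗ LinearMap.proj h
  L_L h g f := funext fun k => A.L_L h g (f k)
  R_R h g f := by
    ext k
    simp only [LinearMap.pi_apply, LinearMap.sub_apply, LinearMap.proj_apply, LinearMap.comp_apply,
      Pi.sub_apply, map_sub, A.R_R, ← add_assoc, add_comm g h, add_right_comm _ _ k]
    abel_nf
  L_R h g f := by
    ext k
    simp only [LinearMap.pi_apply, LinearMap.sub_apply, LinearMap.proj_apply, LinearMap.comp_apply,
      LinearMap.compLeft_apply, Function.comp_apply, map_sub, A.L_R]

lemma shift_R_apply (h : ℕ) (f : ℕ → V) (g : ℕ) :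
    A.shift.R h f g = f (h + g + 1) - f (h + g + 2) - A.R g (f h) := rfl

/-- The Hochschild differential in degree zero. -/
def δ (A : NodalBimodule V) : V →ₗ[ℤ] (ℕ → V) := LinearMap.pi fun h => A.L h - A.R h

lemma δ_apply (m : V) (h : ℕ) : A.δ m h = A.L h m - A.R h m := rfl

lemma shift_δ_apply (f : ℕ → V) (h g : ℕ) :
    A.shift.δ f h g = A.L h (f g) - (f (h + g + 1) - f (h + g + 2) - A.R g (f h)) := rfl

lemma shift_δ_δ (m : V) : A.shift.δ (A.δ m) = 0 := by
  ext h g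
  simp only [shift_δ_apply, δ_apply, map_sub, A.L_L, A.R_R, A.L_R, add_comm g h, Pi.zero_apply]
  abel

/-- Hochschild cohomology in degree one. -/
abbrev H1 (A : NodalBimodule V) : Type _ :=
  LinearMap.ker A.shift.δ ⧸ (LinearMap.range A.δ).submoduleOf (LinearMap.ker A.shift.δ)

/-- The bimodule of Hochschild `n`-cochains, obtained from `A` by `n` shifts: the Hochschild
cohomology of `A` in degree `n + 1` is `(A.cochains n).H1`. -/
def cochains (A : NodalBimodule V) : (n : ℕ) → NodalBimodule (Cochains V n)
  | 0 => A
  | n + 1 => (A.cochains n).shift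

/-- The vanishing of Hochschild cohomology in positive degrees. -/
def IsAcyclic (A : NodalBimodule V) : Prop :=
  ∀ n, Function.Exact (A.cochains n).δ (A.cochains n).shift.δ

/-- A homomorphism of bimodules. -/
structure IsHom (A : NodalBimodule V) (B : NodalBimodule W) (f : V →ₗ[ℤ] W) : Prop where
  map_L : ∀ h m, f (A.L h m) = B.L h (f m)
  map_R : ∀ h m, f (A.R h m) = B.R h (f m)

lemma IsHom.shift (hf : IsHom A B f) : IsHom A.shift B.shift (f.compLeft ℕ) where
  map_L h m := funext fun g => hf.map_L h (m g)
  map_R h m := funext fun g => by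
    simp only [LinearMap.compLeft_apply, Function.comp_apply, shift_R_apply, map_sub, hf.map_R]

lemma IsHom.map_δ (hf : IsHom A B f) (m : V) : f.compLeft ℕ (A.δ m) = B.δ (f m) :=
  funext fun h => by simp only [LinearMap.compLeft_apply, Function.comp_apply, δ_apply, map_sub,
    hf.map_L, hf.map_R]

/-- A short exact sequence `0 → A → B → C → 0` of bimodules. -/
structure IsShortExact (A : NodalBimodule V) (B : NodalBimodule W) (C : NodalBimodule U)
    (i : V →ₗ[ℤ] W) (p : W →ₗ[ℤ] U) : Prop where
  hom_left : IsHom A B i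
  hom_right : IsHom B C p
  injective : Function.Injective i
  exact : Function.Exact i p
  surjective : Function.Surjective p

namespace IsShortExact

lemma shift (S : IsShortExact A B C i p) :
    IsShortExact A.shift B.shift C.shift (i.compLeft ℕ) (p.compLeft ℕ) where
  hom_left := S.hom_left.shift
  hom_right := S.hom_right.shift
  injective := S.injective.comp_left
  exact f := by
    simp only [funext_iff, LinearMap.compLeft_apply, Function.comp_apply, Pi.zero_apply, S.exact _,
      Set.mem_range, Classical.skolem]
  surjective := S.surjective.comp_left

lemma exists_cochains (S : IsShortExact A B C i p) :
    ∀ n, ∃ i' p', IsShortExact (A.cochains n) (B.cochains n) (C.cochains n) i' p'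
  | 0 => ⟨i, p, S⟩
  | n + 1 => let ⟨_, _, S'⟩ := S.exists_cochains n; ⟨_, _, S'.shift⟩

lemma compLeft_δ_eq_zero_iff (S : IsShortExact A B C i p) (b : W) :
    C.δ (p b) = 0 ↔ B.δ b ∈ LinearMap.range (i.compLeft ℕ) := by
  rw [← S.hom_right.map_δ, S.shift.exact]; rfl

lemma mem_ker_map_iff (S : IsShortExact A B C i p) (b : W) :
    p b ∈ (LinearMap.ker B.δ).map p ↔ ∃ a, B.δ b = B.δ (i a) := by
  constructor
  · rintro ⟨b', hb', h⟩
    obtain ⟨a, ha⟩ := (S.exact (b - b')).1 (by rw [map_sub, h, sub_self])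
    exact ⟨a, by rw [ha, map_sub, LinearMap.mem_ker.1 hb', sub_zero]⟩
  · rintro ⟨a, ha⟩
    exact ⟨b - i a, by simp [ha], by simp [S.exact.apply_apply_eq_zero]⟩

lemma nonempty_ker_quotient_equiv_H1 (S : IsShortExact A B C i p)
    (hB : Function.Exact B.δ B.shift.δ) :
    Nonempty ((LinearMap.ker C.δ ⧸ ((LinearMap.ker B.δ).map p).submoduleOf (LinearMap.ker C.δ))
      ≃ₗ[ℤ] A.H1) := by
  let E := (LinearMap.ker C.δ).comap p
  let lift : E →ₗ[ℤ] (ℕ → V) := (LinearEquiv.ofInjective _ S.shift.injective).symm ∘ₗ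
    B.δ.restrict fun b hb => (S.compLeft_δ_eq_zero_iff b).1 hb
  have compLeft_lift (e : E) : i.compLeft ℕ (lift e) = B.δ e :=
    LinearEquiv.ofInjective_symm_apply _ (h := S.shift.injective) _
  have lift_eq_iff (e : E) (c : ℕ → V) : lift e = c ↔ B.δ e = i.compLeft ℕ c := by
    rw [← compLeft_lift, S.shift.injective.eq_iff]
  have lift_mem (e : E) : lift e ∈ LinearMap.ker A.shift.δ := S.shift.shift.injective <| by
    rw [S.hom_left.shift.map_δ, compLeft_lift, shift_δ_δ, map_zero]
  refine nonempty_linearEquiv_of_ker_eq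
    (f := Submodule.mkQ _ ∘ₗ p.restrict fun _ hb => hb)
    (g := Submodule.mkQ _ ∘ₗ lift.codRestrict _ lift_mem) ?_ ?_ ?_
  · refine (Submodule.mkQ_surjective _).comp fun ⟨c, hc⟩ => ?_
    obtain ⟨b, rfl⟩ := S.surjective c
    exact ⟨⟨b, hc⟩, rfl⟩
  · refine (Submodule.mkQ_surjective _).comp fun ⟨c, hc⟩ => ?_
    obtain ⟨b, hb⟩ := (hB (i.compLeft ℕ c)).1 <| by
      rw [← S.hom_left.shift.map_δ, LinearMap.mem_ker.1 hc, map_zero]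
    exact ⟨⟨b, (S.compLeft_δ_eq_zero_iff b).2 ⟨c, hb.symm⟩⟩, Subtype.ext ((lift_eq_iff _ c).2 hb)⟩
  · ext e
    simp only [LinearMap.mem_ker, LinearMap.comp_apply, Submodule.mkQ_apply,
      Submodule.Quotient.mk_eq_zero]
    refine (S.mem_ker_map_iff e).trans (exists_congr fun a => ?_)
    rw [eq_comm (a := A.δ a)]
    exact ((lift_eq_iff e _).trans (by rw [S.hom_left.map_δ])).symm

lemma nonempty_H1_equiv (S : IsShortExact A B C i p) (hB : B.IsAcyclic) (n : ℕ) :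
    Nonempty ((C.cochains n).H1 ≃ₗ[ℤ] (A.cochains (n + 1)).H1) := by
  obtain ⟨i', p', S'⟩ := S.exists_cochains n
  obtain ⟨e⟩ := S'.shift.nonempty_ker_quotient_equiv_H1 (hB (n + 1))
  have map_ker : (LinearMap.ker (B.cochains n).shift.δ).map (p'.compLeft ℕ) =
      LinearMap.range (C.cochains n).δ := by
    rw [LinearMap.exact_iff.1 (hB n), ← LinearMap.range_comp,
      ← LinearMap.range_comp_of_range_eq_top _ (LinearMap.range_eq_top.2 S'.surjective)]
    exact congrArg _ (LinearMap.ext S'.hom_right.map_δ)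
  exact ⟨Submodule.quotEquivOfEq _ _ (by rw [map_ker]) ≪≫ₗ e⟩

end IsShortExact

lemma exact_δ_of_subsingleton (h : Subsingleton A.H1) : Function.Exact A.δ A.shift.δ := by
  refine LinearMap.exact_iff.2 (le_antisymm ?_ ?_)
  · exact Submodule.submoduleOf_eq_top.1 (Submodule.Quotient.subsingleton_iff.1 h)
  · rintro _ ⟨m, rfl⟩
    exact shift_δ_δ m

lemma subsingleton_H1 (h : Function.Exact A.δ A.shift.δ) : Subsingleton A.H1 :=
  Submodule.Quotient.subsingleton_iff.2 <|
    Submodule.submoduleOf_eq_top.2 (LinearMap.exact_iff.1 h).le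

lemma IsShortExact.isAcyclic (S : IsShortExact A B C i p) (hB : B.IsAcyclic) (hC : C.IsAcyclic)
    (h : LinearMap.ker C.δ ≤ (LinearMap.ker B.δ).map p) : A.IsAcyclic
  | 0 => by
    obtain ⟨e⟩ := S.nonempty_ker_quotient_equiv_H1 (hB 0)
    rw [Submodule.submoduleOf_eq_top.2 h] at e
    exact exact_δ_of_subsingleton e.symm.subsingleton
  | n + 1 => by
    obtain ⟨e⟩ := S.nonempty_H1_equiv hB n
    have := subsingleton_H1 (hC n)
    exact exact_δ_of_subsingleton e.symm.subsingleton

/-- `A` is coinduced from the values of `ε`: an element `m` is determined by the values of `ε` on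
`m` and on the `L h m`, which are arbitrary. -/
def IsCoinduced (A : NodalBimodule V) (ε : V →ₗ[ℤ] W) : Prop :=
  (∀ h m, ε m = 0 → ε (A.R h m) = 0) ∧
    Function.Bijective fun m => (ε m, fun h => ε (A.L h m))

namespace IsCoinduced

variable {ε : V →ₗ[ℤ] W}

lemma shift (hA : A.IsCoinduced ε) : A.shift.IsCoinduced (ε.compLeft ℕ) := by
  refine ⟨fun h f hf => funext fun g => ?_, fun f f' hf => funext fun g => hA.2.1 ?_, fun F => ?_⟩
  · have hf (k : ℕ) : ε (f k) = 0 := congrFun hf k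
    simp only [LinearMap.compLeft_apply, Function.comp_apply, shift_R_apply, map_sub, hf,
      hA.1 g _ (hf h), sub_zero, Pi.zero_apply]
  · simp only [Prod.mk.injEq, funext_iff] at hf ⊢
    exact ⟨hf.1 g, fun h => hf.2 h g⟩
  · choose f hf using fun g => hA.2.2 (F.1 g, fun h => F.2 h g)
    simp only [Prod.ext_iff, funext_iff] at hf
    exact ⟨f, Prod.ext (funext fun g => (hf g).1) (funext₂ fun h g => (hf g).2 h)⟩

lemma exact_δ (hA : A.IsCoinduced ε) : Function.Exact A.δ A.shift.δ := by
  refine fun f => ⟨fun hf => ?_, ?_⟩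
  · obtain ⟨m, hm⟩ := hA.2.2 (0, fun h => ε (f h))
    simp only [Prod.mk.injEq, funext_iff] at hm
    have hε (h : ℕ) : ε (f h) = ε (A.δ m h) := by
      rw [δ_apply, map_sub, hA.1 h m hm.1, sub_zero, hm.2]
    refine ⟨m, sub_eq_zero.1 (funext fun g => hA.2.1 ?_)⟩
    have hcocycle : A.shift.δ (A.δ m - f) = 0 := by rw [map_sub, hf, shift_δ_δ, sub_zero]
    have hzero (h : ℕ) : ε ((A.δ m - f) h) = 0 := by rw [Pi.sub_apply, map_sub, hε, sub_self]
    refine Prod.ext ((hzero g).trans (map_zero ε).symm) (funext fun h => ?_)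
    have := congrArg ε (congrFun₂ hcocycle h g)
    rw [shift_δ_apply, map_sub, map_sub, map_sub, hzero, hzero, hA.1 g _ (hzero h)] at this
    simpa using this
  · rintro ⟨m, rfl⟩
    exact shift_δ_δ m

lemma exists_cochains (hA : A.IsCoinduced ε) :
    ∀ n, ∃ ε' : Cochains V n →ₗ[ℤ] Cochains W n, (A.cochains n).IsCoinduced ε'
  | 0 => ⟨ε, hA⟩
  | n + 1 => let ⟨_, h⟩ := hA.exists_cochains n; ⟨_, h.shift⟩

lemma isAcyclic (hA : A.IsCoinduced ε) : A.IsAcyclic := fun n =>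
  let ⟨_, h⟩ := hA.exists_cochains n; h.exact_δ

end IsCoinduced

/-- The kernel of a homomorphism of bimodules. -/
def ker (hp : IsHom B C p) : NodalBimodule (LinearMap.ker p) where
  L h := (B.L h).restrict fun m hm => by
    rw [LinearMap.mem_ker, hp.map_L, LinearMap.mem_ker.1 hm, map_zero]
  R h := (B.R h).restrict fun m hm => by
    rw [LinearMap.mem_ker, hp.map_R, LinearMap.mem_ker.1 hm, map_zero]
  L_L h g m := Subtype.ext (B.L_L h g m)
  R_R h g m := Subtype.ext (B.R_R h g m)
  L_R h g m := Subtype.ext (B.L_R h g m)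

lemma isShortExact_ker (hp : IsHom B C p) (hsurj : Function.Surjective p) :
    IsShortExact (ker hp) B C (LinearMap.ker p).subtype p where
  hom_left := ⟨fun _ _ => rfl, fun _ _ => rfl⟩
  hom_right := hp
  injective := Submodule.subtype_injective _
  exact := LinearMap.exact_subtype_ker_map p
  surjective := hsurj

section Node

variable {K : Type*} [CommRing K] {M : Type*} [AddCommGroup M] [Module K M]

/-- The value `tʰ(t - t²)` of a basis element of `I` at a point `t`. -/
def nodeBasis (t : K) (h : ℕ) : K := t ^ (h + 1) - t ^ (h + 2)

lemma nodeBasis_mul (t : K) (h g : ℕ) :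
    nodeBasis t h * nodeBasis t g = nodeBasis t (h + g + 1) - nodeBasis t (h + g + 2) := by
  simp only [nodeBasis]; ring

lemma nodeBasis_smul_smul (t : K) (h g : ℕ) (m : M) : nodeBasis t h • nodeBasis t g • m =
    nodeBasis t (h + g + 1) • m - nodeBasis t (h + g + 2) • m := by
  rw [smul_smul, nodeBasis_mul, sub_smul]

variable (M) in
/-- The bimodule `M` on which `v` acts as `t` from the left and as `y` from the right. -/
def node (t y : K) : NodalBimodule M where
  L h := Module.toModuleEnd ℤ M (nodeBasis t h)
  R h := Module.toModuleEnd ℤ M (nodeBasis y h)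
  L_L := nodeBasis_smul_smul t
  R_R := nodeBasis_smul_smul y
  L_R _ _ m := smul_comm _ _ m

lemma mem_ker_node_δ {t y : K} {m : M} : m ∈ LinearMap.ker (node M t y).δ ↔
    ∀ h, nodeBasis t h • m = nodeBasis y h • m := by
  simp only [LinearMap.mem_ker, funext_iff, ← sub_eq_zero (a := nodeBasis t _ • m)]
  rfl

variable (M) in
/-- The bimodule of additive maps `φ : ℤ ⊕ I → M`, where `φ.1 = φ 1` and `φ.2` lists the values of
`φ` on the basis of `I`; the left action is through `ℤ ⊕ I`, and on the right `v` acts on `M`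
as `y`. -/
def coind (y : K) : NodalBimodule (M × (ℕ → M)) where
  L h :=
    { toFun := fun φ => (φ.2 h, fun g => φ.2 (g + h + 1) - φ.2 (g + h + 2))
      map_add' := fun φ ψ => Prod.ext rfl (funext fun g => add_sub_add_comm _ _ _ _)
      map_smul' := fun c φ => Prod.ext rfl (funext fun g => (smul_sub c _ _).symm) }
  R h := Module.toModuleEnd ℤ _ (nodeBasis y h)
  L_L h g φ := by
    refine Prod.ext (by simp) (funext fun k => ?_)
    simp only [LinearMap.coe_mk, AddHom.coe_mk, Prod.snd_sub, Pi.sub_apply]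
    ring_nf
  R_R := nodeBasis_smul_smul y
  L_R h g φ := Prod.ext rfl (funext fun _ => (smul_sub (nodeBasis y g) _ _).symm)

lemma isCoinduced_coind (y : K) : (coind M y).IsCoinduced (.fst ℤ M (ℕ → M)) :=
  ⟨fun h _ hφ => (congrArg (nodeBasis y h • ·) hφ).trans (smul_zero _), Function.bijective_id⟩

variable (M) in
/-- The map `ℤ ⊕ I → M` with value `m` at `1` that turns the action of `v` on `I` into that of `t`
on `M`. -/
def evalAt (t : K) : M →ₗ[ℤ] M × (ℕ → M) :=
  LinearMap.prod .id (LinearMap.pi fun h => Module.toModuleEnd ℤ M (nodeBasis t h))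

lemma evalAt_apply (t : K) (m : M) : evalAt M t m = (m, fun h => nodeBasis t h • m) := rfl

lemma isHom_evalAt (t y : K) : IsHom (node M t y) (coind M y) (evalAt M t) where
  map_L h m := Prod.ext rfl <| funext fun g => (nodeBasis_smul_smul t g h m).trans <| by
    simp only [coind, evalAt_apply, LinearMap.coe_mk, AddHom.coe_mk]
  map_R h m := Prod.ext rfl <| funext fun g => smul_comm _ _ m

lemma mem_ker_coind_δ {y : K} {φ : M × (ℕ → M)} :
    φ ∈ LinearMap.ker (coind M y).δ ↔ evalAt M y φ.1 = φ := by
  constructor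
  · intro hφ
    exact Prod.ext rfl <| funext fun h =>
      (sub_eq_zero.1 (congrArg Prod.fst (congrFun hφ h))).symm
  · intro hφ
    rw [← hφ, LinearMap.mem_ker, ← (isHom_evalAt y y).map_δ, mem_ker_node_δ.2 fun _ => rfl,
      map_zero]

variable (M) in
/-- The difference of the left action of `v - v²` and of multiplication by `w`. -/
def coindDefect (y w : K) : M × (ℕ → M) →ₗ[ℤ] M × (ℕ → M) :=
  (coind M y).L 0 - Module.toModuleEnd ℤ _ w

lemma coindDefect_apply (y w : K) (φ : M × (ℕ → M)) : coindDefect M y w φ =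
    (φ.2 0 - w • φ.1, fun h => φ.2 (h + 1) - φ.2 (h + 2) - w • φ.2 h) := rfl

lemma isHom_coindDefect (y w : K) : IsHom (coind M y) (coind M y) (coindDefect M y w) where
  map_L h φ := by
    change (coind M y).L 0 _ - w • _ = (coind M y).L h (_ - _)
    rw [map_sub, L_L, L_L, add_comm 0 h]
    exact congrArg _ (Prod.ext rfl (funext fun _ => smul_sub w _ _))
  map_R h φ := by
    change (coind M y).L 0 _ - w • _ = (coind M y).R h (_ - _)
    rw [map_sub, L_R]
    exact congrArg _ (smul_comm w (nodeBasis y h) φ)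

lemma exists_coindDefect_eq (y w : K) (ψ : M × (ℕ → M)) (m : M) :
    ∃ φ, coindDefect M y w φ = ψ ∧ φ.1 = 0 ∧ φ.2 1 = m := by
  let consecutive : ℕ → M × M := fun n =>
    n.rec (ψ.1, m) fun h ab => (ab.2, ab.2 - w • ab.1 - ψ.2 h)
  refine ⟨(0, fun h => (consecutive h).1), ?_, rfl, rfl⟩
  rw [coindDefect_apply]
  refine Prod.ext (by simp [consecutive]) (funext fun h => ?_)
  change (consecutive h).2 - ((consecutive h).2 - w • (consecutive h).1 - ψ.2 h) -
    w • (consecutive h).1 = ψ.2 h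
  abel

variable (M) in
/-- The elements of `coind M y` on which `v - v²` acts from the left as `w`. -/
def coindFiber (y w : K) : NodalBimodule (LinearMap.ker (coindDefect M y w)) :=
  ker (isHom_coindDefect y w)

lemma mem_ker_coindDefect {y w : K} {φ : M × (ℕ → M)} :
    φ ∈ LinearMap.ker (coindDefect M y w) ↔
      φ.2 0 = w • φ.1 ∧ ∀ h, φ.2 (h + 2) = φ.2 (h + 1) - w • φ.2 h := by
  simp only [LinearMap.mem_ker, coindDefect_apply, Prod.mk_eq_zero, sub_eq_zero, funext_iff,
    Pi.zero_apply, sub_right_comm _ (φ.2 (_ + 2)), eq_comm (a := φ.2 (_ + 2))]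

lemma mem_ker_coindFiber_δ {y w : K} {φ : LinearMap.ker (coindDefect M y w)} :
    φ ∈ LinearMap.ker (coindFiber M y w).δ ↔ evalAt M y φ.1.1 = φ := by
  rw [← mem_ker_coind_δ]
  simp only [LinearMap.mem_ker, funext_iff, Subtype.ext_iff]
  rfl

lemma coindDefect_evalAt (t y w : K) (m : M) :
    coindDefect M y w (evalAt M t m) = evalAt M t ((t - t ^ 2 - w) • m) := by
  have hL : (coind M y).L 0 (evalAt M t m) = evalAt M t (nodeBasis t 0 • m) :=
    ((isHom_evalAt t y).map_L 0 m).symm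
  have hw : w • evalAt M t m = evalAt M t (w • m) :=
    Prod.ext rfl (funext fun h => smul_comm w (nodeBasis t h) m)
  rw [sub_smul, map_sub, ← hw, show t - t ^ 2 = nodeBasis t 0 by simp [nodeBasis], ← hL]
  rfl

lemma isAcyclic_coindFiber {y w : K} (h : Function.Surjective fun m : M => (y - y ^ 2 - w) • m) :
    (coindFiber M y w).IsAcyclic := by
  have hcoind := (isCoinduced_coind (M := M) y).isAcyclic
  refine (isShortExact_ker (isHom_coindDefect y w) fun ψ => ?_).isAcyclic hcoind hcoind
    fun φ hφ => ?_
  · obtain ⟨φ, hφ, -⟩ := exists_coindDefect_eq y w ψ 0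
    exact ⟨φ, hφ⟩
  · obtain ⟨m, hm⟩ := h φ.1
    refine ⟨evalAt M y m, mem_ker_coind_δ.2 rfl, ?_⟩
    rw [coindDefect_evalAt, ← mem_ker_coind_δ.1 hφ, ← hm]

variable (M) in
/-- The elements of `coindFiber M y (t - t ^ 2)` on which `v` acts from the left as `t`. -/
def nodeToFiber (t y : K) : M →ₗ[ℤ] LinearMap.ker (coindDefect M y (t - t ^ 2)) :=
  (evalAt M t).codRestrict _ fun m => by
    rw [LinearMap.mem_ker, coindDefect_evalAt, sub_self, zero_smul, map_zero]

variable (M) in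
/-- The value of `φ` at `(v - t)(v - v²)`. -/
def fiberToNode (t y : K) : LinearMap.ker (coindDefect M y (t - t ^ 2)) →ₗ[ℤ] M :=
  (LinearMap.proj 1 - Module.toModuleEnd ℤ M t ∘ₗ
    (LinearMap.proj 0 : (ℕ → M) →ₗ[ℤ] M)) ∘ₗ .snd ℤ M (ℕ → M) ∘ₗ
    Submodule.subtype _

lemma fiberToNode_apply (t y : K) (φ : LinearMap.ker (coindDefect M y (t - t ^ 2))) :
    fiberToNode M t y φ = φ.1.2 1 - t • φ.1.2 0 := rfl

lemma sub_smul_eq_pow_smul_fiberToNode (t y : K)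
    (φ : LinearMap.ker (coindDefect M y (t - t ^ 2))) (h : ℕ) :
    φ.1.2 (h + 1) - t • φ.1.2 h = (1 - t) ^ h • fiberToNode M t y φ := by
  induction h with
  | zero => rw [pow_zero, one_smul, fiberToNode_apply]
  | succ h ih =>
    have hrec : φ.1.2 (h + 1 + 1) = _ := (mem_ker_coindDefect.1 φ.2).2 h
    rw [hrec, pow_succ' (1 - t), mul_smul, ← ih]
    module

lemma isHom_fiberToNode (t y : K) :
    IsHom (coindFiber M y (t - t ^ 2)) (node M (1 - t) y) (fiberToNode M t y) where
  map_L h φ := by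
    change φ.1.2 (1 + h + 1) - φ.1.2 (1 + h + 2) - t • (φ.1.2 (0 + h + 1) - φ.1.2 (0 + h + 2)) =
      nodeBasis (1 - t) h • fiberToNode M t y φ
    have hbasis : nodeBasis (1 - t) h = (t - t ^ 2) * (1 - t) ^ h := by
      simp only [nodeBasis]; ring
    rw [hbasis, mul_smul, ← sub_smul_eq_pow_smul_fiberToNode, add_comm 1 h, zero_add,
      (mem_ker_coindDefect.1 φ.2).2 (h + 1), (mem_ker_coindDefect.1 φ.2).2 h]
    module
  map_R h φ := by
    change nodeBasis y h • φ.1.2 1 - t • nodeBasis y h • φ.1.2 0 =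
      nodeBasis y h • (φ.1.2 1 - t • φ.1.2 0)
    rw [smul_sub, smul_comm t]

lemma isShortExact_coindFiber (t y : K) : IsShortExact (node M t y) (coindFiber M y (t - t ^ 2))
    (node M (1 - t) y) (nodeToFiber M t y) (fiberToNode M t y) where
  hom_left :=
    { map_L := fun h m => Subtype.ext ((isHom_evalAt t y).map_L h m)
      map_R := fun h m => Subtype.ext ((isHom_evalAt t y).map_R h m) }
  hom_right := isHom_fiberToNode t y
  injective m m' h := congrArg (fun φ => φ.1.1) h
  exact φ := by
    refine ⟨fun hφ => ⟨φ.1.1, Subtype.ext (Prod.ext rfl (funext fun h => ?_))⟩, ?_⟩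
    · change nodeBasis t h • φ.1.1 = φ.1.2 h
      induction h with
      | zero => rw [(mem_ker_coindDefect.1 φ.2).1]; simp [nodeBasis]
      | succ h ih =>
        have hstep := sub_smul_eq_pow_smul_fiberToNode t y φ h
        rw [hφ, smul_zero, sub_eq_zero] at hstep
        rw [hstep, ← ih, smul_smul]
        congr 1
        simp only [nodeBasis]; ring
    · rintro ⟨m, rfl⟩
      change nodeBasis t 1 • m - t • nodeBasis t 0 • m = 0
      simp only [nodeBasis]
      module
  surjective m := by
    obtain ⟨φ, hφ, h0, rfl⟩ := exists_coindDefect_eq y (t - t ^ 2) 0 m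
    refine ⟨⟨φ, LinearMap.mem_ker.2 hφ⟩, ?_⟩
    simp [fiberToNode_apply, (mem_ker_coindDefect.1 hφ).1, h0]

section Periodicity

variable {y z : K} (hsub : Function.Surjective fun m : M => (y - z) • m)
  (hadd : Function.Surjective fun m : M => (1 - y - z) • m)
include hsub hadd

lemma isAcyclic_coindFiber_sub_sq : (coindFiber M y (z - z ^ 2)).IsAcyclic := by
  refine isAcyclic_coindFiber fun m => ?_
  obtain ⟨m, rfl⟩ := hsub m
  obtain ⟨m, rfl⟩ := hadd m
  exact ⟨m, by module⟩

lemma isAcyclic_coindFiber_one_sub_sub_sq :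
    (coindFiber M y ((1 - z) - (1 - z) ^ 2)).IsAcyclic := by
  rw [show (1 - z) - (1 - z) ^ 2 = z - z ^ 2 by ring]
  exact isAcyclic_coindFiber_sub_sq hsub hadd

lemma nonempty_H1_node_equiv_add_two (n : ℕ) : Nonempty
    (((node M z y).cochains n).H1 ≃ₗ[ℤ] ((node M z y).cochains (n + 2)).H1) := by
  obtain ⟨e⟩ := (isShortExact_coindFiber (M := M) (1 - z) y).nonempty_H1_equiv
    (isAcyclic_coindFiber_one_sub_sub_sq hsub hadd) n
  obtain ⟨e'⟩ := (isShortExact_coindFiber (M := M) z y).nonempty_H1_equiv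
    (isAcyclic_coindFiber_sub_sq hsub hadd) (n + 1)
  rw [sub_sub_cancel] at e
  exact ⟨e ≪≫ₗ e'⟩

end Periodicity

lemma smul_eq_zero_of_mem_ker_node_δ {t y : K} {m : M} (hm : m ∈ LinearMap.ker (node M t y).δ) :
    (t * y) • (t - y) • m = 0 ∧ (t - y) • (1 - t - y) • m = 0 := by
  have h₀ := mem_ker_node_δ.1 hm 0
  have h₁ := mem_ker_node_δ.1 hm 1
  simp only [nodeBasis] at h₀ h₁
  constructor
  · linear_combination (norm := module) h₁ - (t + y) • h₀
  · linear_combination (norm := module) h₀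

lemma mem_map_ker_coindFiber_δ {y : Kˣ} {t : K} {f : M} :
    f ∈ (LinearMap.ker (coindFiber M (y : K) (t - t ^ 2)).δ).map (fiberToNode M t y) ↔
      ∃ m : M, ((y : K) - t) • (1 - (y : K) - t) • m = 0 ∧
        ((y : K) - t) • (1 - (y : K)) • m = f := by
  have defect (m : M) : evalAt M (y : K) m ∈ LinearMap.ker (coindDefect M (y : K) (t - t ^ 2)) ↔
      ((y : K) - t) • (1 - (y : K) - t) • m = 0 := by
    rw [LinearMap.mem_ker, coindDefect_evalAt, smul_smul,
      show ((y : K) - t) * (1 - (y : K) - t) = y - (y : K) ^ 2 - (t - t ^ 2) by ring]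
    exact ⟨congrArg Prod.fst, fun h => by rw [h, map_zero]⟩
  have value (m : M) : nodeBasis (y : K) 1 • m - t • nodeBasis (y : K) 0 • m =
      ((y : K) - t) • (1 - (y : K)) • (y : K) • m := by
    simp only [nodeBasis]
    module
  constructor
  · rintro ⟨φ, hφ, rfl⟩
    have hφ := mem_ker_coindFiber_δ.1 hφ
    have hker := (defect φ.1.1).1 (hφ ▸ φ.2)
    refine ⟨(y : K) • φ.1.1, ?_, ?_⟩
    · rw [smul_comm (1 - (y : K) - t), smul_comm ((y : K) - t), hker, smul_zero]
    · rw [← value, fiberToNode_apply, ← hφ, evalAt_apply]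
  · rintro ⟨m, hm, rfl⟩
    obtain ⟨m, rfl⟩ : ∃ m', m = (y : K) • m' := ⟨(↑y⁻¹ : K) • m, by simp [smul_smul]⟩
    have hm : ((y : K) - t) • (1 - (y : K) - t) • m = 0 := by
      refine y.isUnit.smul_eq_zero.1 ?_
      rw [← hm]
      module
    exact ⟨⟨_, (defect m).2 hm⟩, mem_ker_coindFiber_δ.2 rfl, value m⟩

variable (M) in
/-- The elements on which both `y` and `z` act trivially. -/
def commonInvariants (y z : K) : Submodule ℤ M :=
  LinearMap.ker (Module.toModuleEnd ℤ M (1 - y)) ⊓ LinearMap.ker (Module.toModuleEnd ℤ M (1 - z))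

lemma mem_commonInvariants {y z : K} {m : M} :
    m ∈ commonInvariants M y z ↔ (1 - y) • m = 0 ∧ (1 - z) • m = 0 := Iff.rfl

variable {y z : Kˣ}

lemma smul_mem_commonInvariants {m : M}
    (hm : m ∈ LinearMap.ker (node M (1 - z : K) y).δ) :
    (1 - (y : K) - z) • m ∈ commonInvariants M (y : K) z := by
  obtain ⟨h₁, h₂⟩ := smul_eq_zero_of_mem_ker_node_δ hm
  have hz : (1 - (z : K)) • (1 - (y : K) - z) • m = 0 := by
    refine y.isUnit.smul_eq_zero.1 ?_
    rw [← h₁]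
    module
  refine mem_commonInvariants.2 ⟨?_, hz⟩
  linear_combination (norm := module) hz + h₂

lemma mem_ker_node_δ_of_mem_commonInvariants {m : M} (hm : m ∈ commonInvariants M (y : K) z) :
    m ∈ LinearMap.ker (node M (1 - z : K) y).δ := by
  obtain ⟨hy, hz⟩ := mem_commonInvariants.1 hm
  refine mem_ker_node_δ.2 fun h => ?_
  have (t : K) : nodeBasis t h • m = t ^ (h + 1) • (1 - t) • m := by
    simp only [nodeBasis]
    module
  rw [this y, hy, this, pow_succ, mul_smul, smul_comm (1 - (z : K)) (1 - (1 - (z : K))), hz]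
  simp only [smul_zero]

variable (hsub : Function.Surjective fun m : M => ((y : K) - z) • m)
  (hadd : Function.Surjective fun m : M => (1 - (y : K) - z) • m)

include hsub in
lemma mem_map_ker_coindFiber_δ_iff_smul_eq_zero {f : M} :
    f ∈ (LinearMap.ker (coindFiber M (y : K) (z - z ^ 2)).δ).map (fiberToNode M (z : K) y) ↔
      (1 - (y : K) - z) • f = 0 := by
  rw [mem_map_ker_coindFiber_δ]
  constructor
  · rintro ⟨m, hm, rfl⟩
    linear_combination (norm := module) (1 - (y : K)) • hm
  · intro hf
    obtain ⟨m, rfl⟩ := hsub f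
    obtain ⟨m, rfl⟩ : ∃ m', m = (z : K) • m' := ⟨(↑z⁻¹ : K) • m, by simp [smul_smul]⟩
    have hm : ((y : K) - z) • (1 - (y : K) - z) • m = 0 := by
      refine z.isUnit.smul_eq_zero.1 ?_
      rw [← hf]
      module
    exact ⟨m, hm, by linear_combination (norm := module) hm⟩

include hsub hadd

lemma nonempty_H1_node_equiv :
    Nonempty ((node M (z : K) y).H1 ≃ₗ[ℤ] commonInvariants M (y : K) z) := by
  obtain ⟨e⟩ := (isShortExact_coindFiber (M := M) (z : K) y).nonempty_ker_quotient_equiv_H1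
    (isAcyclic_coindFiber_sub_sq hsub hadd 0)
  let toInvariants := (Module.toModuleEnd ℤ M (1 - (y : K) - z)).restrict
    fun m (hm : m ∈ LinearMap.ker (node M (1 - z : K) y).δ) => smul_mem_commonInvariants hm
  have surjective : Function.Surjective toInvariants := by
    intro ⟨m, hm⟩
    refine ⟨⟨-m, mem_ker_node_δ_of_mem_commonInvariants (neg_mem hm)⟩, Subtype.ext ?_⟩
    obtain ⟨hy, hz⟩ := mem_commonInvariants.1 hm
    change (1 - (y : K) - z) • -m = m
    linear_combination (norm := module) - hy - hz
  obtain ⟨e'⟩ := nonempty_linearEquiv_of_ker_eq (Submodule.mkQ_surjective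
    (((LinearMap.ker (coindFiber M (y : K) (z - z ^ 2)).δ).map
      (fiberToNode M (z : K) y)).submoduleOf _)) surjective <| Submodule.ext fun f => by
    rw [Submodule.ker_mkQ]
    exact (mem_map_ker_coindFiber_δ_iff_smul_eq_zero hsub).trans
      (Subtype.ext_iff (a1 := toInvariants f) (a2 := 0)).symm
  exact ⟨e.symm ≪≫ₗ e'⟩

lemma subsingleton_H1_cochains_node_one
    (hdiv : ∀ m : M, ((y : K) - z) • m = 0 →
      ∃ m' : M, ((y : K) - z) • m' = 0 ∧ (1 - (y : K)) • m' = m) :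
    Subsingleton ((node M (z : K) y).cochains 1).H1 := by
  have hzero : Subsingleton (node M (1 - z : K) y).H1 := by
    obtain ⟨e⟩ := (isShortExact_coindFiber (M := M) (1 - z : K) y).nonempty_ker_quotient_equiv_H1
      (isAcyclic_coindFiber_one_sub_sub_sq hsub hadd 0)
    rw [sub_sub_cancel] at e
    rw [Submodule.submoduleOf_eq_top.2 fun f hf => ?_] at e
    · exact e.symm.subsingleton
    have hf₀ : (y - z : K) • f = 0 := by
      refine (z * y).isUnit.smul_eq_zero.1 ?_
      rw [Units.val_mul, ← neg_eq_zero, ← (smul_eq_zero_of_mem_ker_node_δ hf).1]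
      module
    obtain ⟨m', hm', rfl⟩ := hdiv f hf₀
    obtain ⟨m, hm⟩ := hadd (-m')
    have hm : (1 - (y : K) - z) • m = -m' := hm
    exact mem_map_ker_coindFiber_δ.2 ⟨m,
      by linear_combination (norm := module) (y - z : K) • hm - hm',
      by linear_combination (norm := module) -(1 - y : K) • hm⟩
  obtain ⟨e⟩ := (isShortExact_coindFiber (M := M) (z : K) y).nonempty_H1_equiv
    (isAcyclic_coindFiber_sub_sq hsub hadd) 0
  have : Subsingleton ((node M (1 - z : K) y).cochains 0).H1 := hzero
  exact e.symm.subsingleton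

end Node

end NodalBimodule

/-! ### Functions on the square lattice -/

lemma exists_int_rec {X : Type*} (x₀ : X) (r : ℤ → X → X → Prop) (next : ∀ k x, ∃ x', r k x x')
    (prev : ∀ k x', ∃ x, r k x x') : ∃ f : ℤ → X, ∀ k, r k (f k) (f (k + 1)) := by
  choose up hup using next
  choose down hdown using prev
  let f (k : ℤ) : X := k.inductionOn' 0 x₀ (fun k _ x => up k x) (fun k _ x => down (k - 1) x)
  refine ⟨f, fun k => ?_⟩
  obtain hk | hk := le_or_gt 0 k
  · rw [show f (k + 1) = up k (f k) from Int.inductionOn'_add_one hk]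
    exact hup k _
  · have : f k = down k (f (k + 1)) := by
      have := Int.inductionOn'_sub_one (b := 0) (motive := fun _ => X) (zero := x₀)
        (succ := fun k _ x => up k x) (pred := fun k _ x => down (k - 1) x) (z := k + 1) (by omega)
      simpa using this
    rw [this]
    exact hdown k _

lemma exists_int_add_one_sub_eq {A : Type*} [AddCommGroup A] (g : ℤ → A) :
    ∃ f : ℤ → A, ∀ k, f (k + 1) - f k = g k :=
  exists_int_rec 0 (fun k x x' => x' - x = g k) (fun k x => ⟨g k + x, add_sub_cancel_right _ _⟩)
    (fun k x' => ⟨x' - g k, sub_sub_cancel _ _⟩)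

/-- Integral functions on `ℤ²`, a module over `ℤ[ℤ²]` by translation. -/
abbrev PlaneFunction : Type := ℤ → ℤ → ℤ

namespace PlaneFunction

noncomputable section

/-- The action of `ℤ²` on functions by translation. -/
def translate : Multiplicative (ℤ × ℤ) →* Module.End ℤ PlaneFunction where
  toFun p :=
    { toFun := fun m a b => m (a + p.toAdd.1) (b + p.toAdd.2)
      map_add' := fun _ _ => rfl
      map_smul' := fun _ _ => rfl }
  map_one' := LinearMap.ext fun m => funext₂ fun a b => congrArg₂ m (add_zero a) (add_zero b)
  map_mul' _ _ := LinearMap.ext fun m => funext₂ fun a b =>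
    congrArg₂ m (add_assoc a _ _).symm (add_assoc b _ _).symm

/-- The group ring `ℤ[ℤ²]`. -/
abbrev TranslationRing : Type := MonoidAlgebra ℤ (Multiplicative (ℤ × ℤ))

instance : Module TranslationRing PlaneFunction :=
  Module.compHom _ (MonoidAlgebra.lift ℤ (Module.End ℤ PlaneFunction) _ translate).toRingHom

/-- The translation by a vector, as a unit of the group ring. -/
def translation (p : ℤ × ℤ) : TranslationRingˣ :=
  Units.map (MonoidAlgebra.of ℤ _) (toUnits (Multiplicative.ofAdd p))

/-- The translation in the first variable. -/
abbrev z : TranslationRingˣ := translation (1, 0)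

/-- The translation in the second variable. -/
abbrev y : TranslationRingˣ := translation (0, 1)

lemma translation_smul_apply (p : ℤ × ℤ) (m : PlaneFunction) (a b : ℤ) :
    ((translation p : TranslationRing) • m) a b = m (a + p.1) (b + p.2) := by
  change MonoidAlgebra.lift ℤ (Module.End ℤ PlaneFunction) _ translate
    (MonoidAlgebra.of ℤ _ (Multiplicative.ofAdd p)) m a b = _
  rw [MonoidAlgebra.lift_of]
  rfl

lemma z_pow_smul_apply (n : ℕ) (m : PlaneFunction) (a b : ℤ) :
    ((z : TranslationRing) ^ n • m) a b = m (a + n) b := by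
  induction n generalizing a with
  | zero => simp
  | succ n ih =>
    rw [pow_succ', mul_smul, translation_smul_apply]
    dsimp only
    rw [add_zero, ih, Nat.cast_succ, add_assoc, add_comm 1]

lemma y_pow_smul_apply (n : ℕ) (m : PlaneFunction) (a b : ℤ) :
    ((y : TranslationRing) ^ n • m) a b = m a (b + n) := by
  induction n generalizing b with
  | zero => simp
  | succ n ih =>
    rw [pow_succ', mul_smul, translation_smul_apply]
    dsimp only
    rw [add_zero, ih, Nat.cast_succ, add_assoc, add_comm 1]

lemma z_smul_apply (m : PlaneFunction) (a b : ℤ) :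
    ((z : TranslationRing) • m) a b = m (a + 1) b := by
  simpa using z_pow_smul_apply 1 m a b

lemma y_smul_apply (m : PlaneFunction) (a b : ℤ) :
    ((y : TranslationRing) • m) a b = m a (b + 1) := by
  simpa using y_pow_smul_apply 1 m a b

lemma sub_apply (m m' : PlaneFunction) (a b : ℤ) : (m - m') a b = m a b - m' a b := rfl

lemma y_sub_z_smul_apply (m : PlaneFunction) (a b : ℤ) :
    ((y - z : TranslationRing) • m) a b = m a (b + 1) - m (a + 1) b := by
  rw [sub_smul, sub_apply, y_smul_apply, z_smul_apply]

lemma one_sub_y_smul_apply (m : PlaneFunction) (a b : ℤ) :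
    ((1 - y : TranslationRing) • m) a b = m a b - m a (b + 1) := by
  rw [sub_smul, sub_apply, one_smul, y_smul_apply]

lemma one_sub_z_smul_apply (m : PlaneFunction) (a b : ℤ) :
    ((1 - z : TranslationRing) • m) a b = m a b - m (a + 1) b := by
  rw [sub_smul, sub_apply, one_smul, z_smul_apply]

lemma surjective_y_sub_z_smul :
    Function.Surjective fun m : PlaneFunction => (y - z : TranslationRing) • m := by
  intro m
  choose f hf using fun s : ℤ => exists_int_add_one_sub_eq fun b => m (s - b - 1) b
  refine ⟨fun a b => f (a + b) b, funext₂ fun a b => ?_⟩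
  dsimp only
  rw [y_sub_z_smul_apply, ← add_assoc, add_right_comm a 1, hf]
  congr 1
  ring

lemma surjective_one_sub_y_sub_z_smul :
    Function.Surjective fun m : PlaneFunction => (1 - y - z : TranslationRing) • m := by
  intro m
  obtain ⟨f, hf⟩ := exists_int_rec (X := ℤ → ℤ) 0
    (fun b r r' => ∀ a, r a - r' a - r (a + 1) = m a b)
    (fun b r => ⟨fun a => r a - r (a + 1) - m a b, fun a => by ring⟩)
    (fun b r' => (exists_int_add_one_sub_eq fun a => - r' a - m a b).imp
      fun r hr a => by linear_combination -hr a)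
  refine ⟨fun a b => f b a, funext₂ fun a b => ?_⟩
  dsimp only
  rw [sub_smul, sub_apply, one_sub_y_smul_apply, z_smul_apply, hf]

lemma apply_eq_apply_zero_add {m : PlaneFunction} (hm : (y - z : TranslationRing) • m = 0)
    (a b : ℤ) : m a b = m 0 (a + b) := by
  have periodic : Function.Periodic (fun k => m k (a + b - k)) 1 := fun k => by
    have := congrFun₂ hm k (a + b - (k + 1))
    rw [y_sub_z_smul_apply, ← sub_sub, sub_add_cancel] at this
    dsimp only
    rw [← sub_sub]
    exact (sub_eq_zero.1 this).symm
  simpa using periodic.int_mul_eq a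

lemma exists_one_sub_y_smul_eq (m : PlaneFunction) (hm : (y - z : TranslationRing) • m = 0) :
    ∃ m' : PlaneFunction,
      (y - z : TranslationRing) • m' = 0 ∧ (1 - y : TranslationRing) • m' = m := by
  obtain ⟨f, hf⟩ := exists_int_add_one_sub_eq fun s => - m 0 s
  refine ⟨fun a b => f (a + b), funext₂ fun a b => ?_, funext₂ fun a b => ?_⟩
  · rw [y_sub_z_smul_apply, ← add_assoc, add_right_comm a 1, sub_self]
    rfl
  · rw [one_sub_y_smul_apply, apply_eq_apply_zero_add hm, ← add_assoc]
    linear_combination -hf (a + b)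

open NodalBimodule

lemma nonempty_commonInvariants_equiv :
    Nonempty (commonInvariants PlaneFunction (y : TranslationRing) z ≃ₗ[ℤ] ℤ) := by
  let eval : commonInvariants PlaneFunction (y : TranslationRing) z →ₗ[ℤ] ℤ :=
    ((LinearMap.proj 0 : (ℤ → ℤ) →ₗ[ℤ] ℤ) ∘ₗ (LinearMap.proj 0 : (ℤ → ℤ → ℤ) →ₗ[ℤ] ℤ → ℤ)) ∘ₗ
      Submodule.subtype _
  refine ⟨LinearEquiv.ofBijective eval ⟨?_, ?_⟩⟩
  · refine (injective_iff_map_eq_zero eval).2 fun ⟨m, hm⟩ h => Subtype.ext (funext₂ fun a b => ?_)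
    obtain ⟨hy, hz⟩ := mem_commonInvariants.1 hm
    have periodic_y : Function.Periodic (m a) 1 := fun b => Eq.symm <|
      sub_eq_zero.1 ((one_sub_y_smul_apply m a b).symm.trans (congrFun₂ hy a b))
    have periodic_z : Function.Periodic (m · 0) 1 := fun a => Eq.symm <|
      sub_eq_zero.1 ((one_sub_z_smul_apply m a 0).symm.trans (congrFun₂ hz a 0))
    have const_y : m a b = m a 0 := by simpa using periodic_y.int_mul_eq b
    have const_z : m a 0 = m 0 0 := by simpa using periodic_z.int_mul_eq a
    exact const_y.trans (const_z.trans h)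
  · refine fun c => ⟨⟨fun _ _ => c, mem_commonInvariants.2 ⟨?_, ?_⟩⟩, rfl⟩ <;>
    refine funext₂ fun a b => ?_
    · exact (one_sub_y_smul_apply _ a b).trans (sub_self c)
    · exact (one_sub_z_smul_apply _ a b).trans (sub_self c)

/-- The bimodule of functions on `ℤ²`. -/
abbrev bimodule : NodalBimodule PlaneFunction := node PlaneFunction (z : TranslationRing) y

lemma bimodule_L_apply (h : ℕ) (m : PlaneFunction) (a b : ℤ) :
    bimodule.L h m a b = m (a + h + 1) b - m (a + h + 2) b := by
  change (((z : TranslationRing) ^ (h + 1) - (z : TranslationRing) ^ (h + 2)) • m) a b = _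
  rw [sub_smul, sub_apply, z_pow_smul_apply, z_pow_smul_apply]
  push_cast
  ring_nf

lemma bimodule_R_apply (h : ℕ) (m : PlaneFunction) (a b : ℤ) :
    bimodule.R h m a b = m a (b + h + 1) - m a (b + h + 2) := by
  change (((y : TranslationRing) ^ (h + 1) - (y : TranslationRing) ^ (h + 2)) • m) a b = _
  rw [sub_smul, sub_apply, y_pow_smul_apply, y_pow_smul_apply]
  push_cast
  ring_nf

lemma exists_eq_sub_of_mem_ker_δ {m : PlaneFunction} (hm : m ∈ LinearMap.ker bimodule.δ) :
    ∃ u : ℤ → ℤ, ∀ a b, m a b = u (-(a + b)) - u (-(a + b) + 1) := by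
  have hyz : (y - z : TranslationRing) • m = 0 := by
    rw [← neg_sub (z : TranslationRing), neg_smul, neg_eq_zero]
    exact (z * y).isUnit.smul_eq_zero.1 (smul_eq_zero_of_mem_ker_node_δ hm).1
  obtain ⟨u, hu⟩ := exists_int_add_one_sub_eq fun s => -m 0 (-s)
  refine ⟨u, fun a b => ?_⟩
  rw [apply_eq_apply_zero_add hyz, ← neg_sub, hu, neg_neg, neg_neg]

lemma nonempty_H1_cochains_equiv (n : ℕ) : Nonempty ((bimodule.cochains (2 * n)).H1 ≃ₗ[ℤ] ℤ) := by
  induction n with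
  | zero =>
    obtain ⟨e⟩ := nonempty_H1_node_equiv surjective_y_sub_z_smul surjective_one_sub_y_sub_z_smul
    obtain ⟨e'⟩ := nonempty_commonInvariants_equiv
    exact ⟨e ≪≫ₗ e'⟩
  | succ n ih =>
    obtain ⟨e⟩ := ih
    obtain ⟨e'⟩ := nonempty_H1_node_equiv_add_two surjective_y_sub_z_smul
      surjective_one_sub_y_sub_z_smul (2 * n)
    exact ⟨e'.symm ≪≫ₗ e⟩

lemma subsingleton_H1_cochains (n : ℕ) : Subsingleton (bimodule.cochains (2 * n + 1)).H1 := by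
  induction n with
  | zero =>
    exact subsingleton_H1_cochains_node_one surjective_y_sub_z_smul
      surjective_one_sub_y_sub_z_smul exists_one_sub_y_smul_eq
  | succ n ih =>
    obtain ⟨e⟩ := nonempty_H1_node_equiv_add_two surjective_y_sub_z_smul
      surjective_one_sub_y_sub_z_smul (2 * n + 1)
    exact e.symm.subsingleton

end

end PlaneFunction

/-! ### Exactness and homology of short complexes -/

open CategoryTheory

universe u v w

lemma rep_exact_of_forall_exists {k : Type u} {G : Type v} [CommRing k] [Group G]
    {S : ShortComplex (Rep.{w} k G)}
    (h : ∀ x, S.g.hom x = 0 → ∃ y, S.f.hom y = x) : S.Exact := by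
  apply (forget₂ (Rep.{w} k G) (ModuleCat.{w} k)).reflects_exact_of_faithful
  exact (ShortComplex.moduleCat_exact_iff _).2 h

lemma nonempty_homology_equiv {R : Type u} {E M : Type*} [Ring R] [AddCommGroup E] [AddCommGroup M]
    [Module R E] [Module R M] {S : ShortComplex (ModuleCat.{v} R)} {f : E →ₗ[R] S.X₂}
    {g : E →ₗ[R] M} (hf : Function.Surjective f) (hg : Function.Surjective g)
    {Z B : Submodule R M} (hZ : ∀ e, g e ∈ Z ↔ S.g (f e) = 0)
    (hB : ∀ e, g e ∈ B ↔ ∃ w, S.f w = f e) :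
    Nonempty (S.homology ≃ₗ[R] Z ⧸ B.submoduleOf Z) := by
  refine (nonempty_linearEquiv_of_ker_eq
    (f := (LinearMap.range S.moduleCatToCycles).mkQ ∘ₗ
      f.restrict (p := Z.comap g) fun e he => LinearMap.mem_ker.2 ((hZ e).1 he))
    (g := (B.submoduleOf Z).mkQ ∘ₗ g.restrict fun _ he => he) ?_ ?_ ?_).map
        (S.moduleCatHomologyIso.toLinearEquiv ≪≫ₗ ·)
  · refine (Submodule.mkQ_surjective _).comp fun ⟨x, hx⟩ => ?_
    obtain ⟨e, rfl⟩ := hf x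
    exact ⟨⟨e, (hZ e).2 hx⟩, rfl⟩
  · refine (Submodule.mkQ_surjective _).comp fun ⟨x, hx⟩ => ?_
    obtain ⟨e, rfl⟩ := hg x
    exact ⟨⟨e, hx⟩, rfl⟩
  · ext ⟨e, he⟩
    simp only [LinearMap.mem_ker, LinearMap.comp_apply, Submodule.mkQ_apply,
      Submodule.Quotient.mk_eq_zero]
    refine Iff.trans ?_ (hB e).symm
    exact exists_congr fun _ => Subtype.ext_iff

namespace ThompsonF

noncomputable section

/-! ### The restriction to the commutator subgroup -/

/-- The inclusion of the commutator subgroup in `Y`. -/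
def toY : commutator ThompsonF →* Y :=
  Subgroup.inclusion fun _ hg => ((mem_commutator_iff _).1 hg).1

lemma deg_toY (g : commutator ThompsonF) : deg (toY g) = 0 :=
  congrArg Multiplicative.toAdd ((mem_commutator_iff _).1 g.2).2

lemma deg_mul_toY_inv (κ : Y) (g : commutator ThompsonF) : deg (κ * (toY g)⁻¹) = deg κ := by
  rw [deg_mul, deg_inv, deg_toY, neg_zero, add_zero]

/-- The element of the commutator subgroup which moves `gen 0 ^ deg κ` to `κ`. -/
def fiberCoord (κ : Y) : commutator ThompsonF :=
  ⟨(κ⁻¹ * gen 0 ^ deg κ : Y), (mem_commutator_iff _).2 ⟨SetLike.coe_mem _, by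
    have : deg (κ⁻¹ * gen 0 ^ deg κ) = 0 := by
      rw [deg_mul, deg_inv, deg_zpow, deg_gen, mul_one, neg_add_cancel]
    exact this⟩⟩

lemma toY_fiberCoord (κ : Y) : toY (fiberCoord κ) = κ⁻¹ * gen 0 ^ deg κ := rfl

lemma toY_injective : Function.Injective toY := Subgroup.inclusion_injective _

lemma zpow_mul_toY_fiberCoord_inv (κ : Y) : gen 0 ^ deg κ * (toY (fiberCoord κ))⁻¹ = κ := by
  rw [toY_fiberCoord, mul_inv_rev, inv_inv, mul_inv_cancel_left]

lemma fiberCoord_mul_toY_inv (κ : Y) (g : commutator ThompsonF) :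
    fiberCoord (κ * (toY g)⁻¹) = g * fiberCoord κ := by
  apply toY_injective
  rw [map_mul, toY_fiberCoord, toY_fiberCoord, deg_mul_toY_inv, mul_inv_rev, inv_inv, mul_assoc]

lemma fiberCoord_zpow (c : ℤ) : fiberCoord (gen 0 ^ c) = 1 := by
  apply toY_injective
  rw [toY_fiberCoord, deg_zpow, deg_gen, mul_one, inv_mul_cancel, map_one]

/-- The action of the commutator subgroup on the `n`-chains. -/
def chainAction (n : ℕ) : Representation ℤ (commutator ThompsonF) (chains n) where
  toFun g := (translate (toY g)⁻¹).restrict fun _ hz => translate_mem_chains _ hz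
  map_one' := LinearMap.ext fun z => Subtype.ext <|
    (congrArg (translate · z.1) (by rw [map_one, inv_one])).trans (translate_one z.1)
  map_mul' g h := LinearMap.ext fun z => Subtype.ext <|
    (congrArg (translate · z.1) (by rw [map_mul, mul_inv_rev])).trans (translate_translate ..).symm

/-- The `n`-chains as a representation of the commutator subgroup. -/
abbrev chainRep (n : ℕ) : Rep ℤ (commutator ThompsonF) := Rep.of (chainAction n)

/-- The trivial integral representation of the commutator subgroup. -/
abbrev trivialRep : Rep ℤ (commutator ThompsonF) := Rep.trivial ℤ (commutator ThompsonF) ℤ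

variable {n : ℕ}

open Classical in
/-- The representatives of the cells modulo the commutator subgroup; the value is `0` if `l` is not
a gapped word of length `n`. -/
def cell (n : ℕ) (l : List ℤ) (c : ℤ) : chains n :=
  if h : Gapped l ∧ l.length = n then
    ⟨.single (l, gen 0 ^ c) 1, Finsupp.single_mem_supported _ _ h⟩
  else 0

lemma coe_cell {l : List ℤ} (hl : Gapped l) (hn : l.length = n) (c : ℤ) :
    (cell n l c : Chain) = .single (l, gen 0 ^ c) 1 := by
  rw [cell, dif_pos ⟨hl, hn⟩]

section Lift

variable {V : Type*} [AddCommGroup V] [Module ℤ V] {ρ : Representation ℤ (commutator ThompsonF) V}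

lemma intertwiningMap_ext {φ ψ : (chainAction n).IntertwiningMap ρ}
    (h : ∀ l, Gapped l → l.length = n → ∀ c, φ (cell n l c) = ψ (cell n l c)) : φ = ψ := by
  refine DFunLike.ext _ _ fun z => ?_
  obtain ⟨z', hz', hzz'⟩ := supported_le_of_single_mem
    (N := (LinearMap.eqLocus φ.toLinearMap ψ.toLinearMap).map (chains n).subtype)
    (by
      rintro ⟨l, κ⟩ ⟨hl, hn⟩
      refine ⟨chainAction n (fiberCoord κ) (cell n l (deg κ)), ?_, ?_⟩
      · exact (Representation.IntertwiningMap.isIntertwining _ _ φ _ _).trans <|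
          (congrArg (ρ _) (h l hl hn _)).trans
            (Representation.IntertwiningMap.isIntertwining _ _ ψ _ _).symm
      · refine (congrArg _ (coe_cell hl hn _)).trans ((translate_single ..).trans ?_)
        rw [zpow_mul_toY_fiberCoord_inv]) z.2
  obtain rfl : z' = z := Subtype.ext hzz'
  exact hz'

variable (ρ) (v : List ℤ → ℤ → V)

/-- The equivariant extension of a function on the representatives of the cells. -/
def extend : Chain →ₗ[ℤ] V :=
  Finsupp.linearCombination ℤ fun c : Cell => ρ (fiberCoord c.2) (v c.1 (deg c.2))

lemma extend_single (l : List ℤ) (κ : Y) :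
    extend ρ v (.single (l, κ) 1) = ρ (fiberCoord κ) (v l (deg κ)) :=
  (Finsupp.linearCombination_single ..).trans (@one_smul ℤ V _ (_) _)

lemma extend_translate (g : commutator ThompsonF) (z : Chain) :
    extend ρ v (translate (toY g)⁻¹ z) = ρ g (extend ρ v z) := by
  suffices extend ρ v ∘ₗ translate (toY g)⁻¹ = ρ g ∘ₗ extend ρ v from LinearMap.congr_fun this z
  ext ⟨l, κ⟩
  simp only [LinearMap.comp_apply, Finsupp.lsingle_apply, translate_single, extend_single,
    fiberCoord_mul_toY_inv, deg_mul_toY_inv, map_mul, Module.End.mul_apply]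

/-- The intertwining map with given values on the representatives of the cells. -/
def chainLift (n : ℕ) : (chainAction n).IntertwiningMap ρ :=
  LinearMap.intertwiningMap_of_isIntertwiningMap _ _
    (extend ρ v ∘ₗ (chains n).subtype) fun g z => extend_translate ρ v g z.1

lemma chainLift_cell {l : List ℤ} (hl : Gapped l) (hn : l.length = n) (c : ℤ) :
    chainLift ρ v n (cell n l c) = v l c := by
  refine (congrArg (extend ρ v) (coe_cell hl hn c)).trans ?_
  rw [extend_single, fiberCoord_zpow, deg_zpow, deg_gen, mul_one, map_one, Module.End.one_apply]

end Lift

instance : Projective (chainRep n) where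
  factors {E X} f e _ := by
    let _ : Module ℤ E := E.hV2
    let _ : Module ℤ X := X.hV2
    choose s hs using (Rep.epi_iff_surjective e).1 inferInstance
    refine ⟨Rep.ofHom (chainLift E.ρ (fun l c => s (f.hom (cell n l c))) n), Rep.hom_ext ?_⟩
    refine intertwiningMap_ext fun l hl hn c => ?_
    exact (congrArg e.hom (chainLift_cell E.ρ _ hl hn c)).trans (hs _)

/-! ### The projective resolution of the trivial representation -/

/-- The boundary as a homomorphism of representations. -/
def boundaryHom (n : ℕ) : chainRep (n + 1) ⟶ chainRep n :=
  Rep.ofHom (LinearMap.intertwiningMap_of_isIntertwiningMap _ _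
    (bdry.restrict fun _ hz => bdry_mem_chains hz)
    fun _ z => Subtype.ext (translate_bdry _ z.1).symm)

lemma boundaryHom_comp (n : ℕ) : boundaryHom (n + 1) ≫ boundaryHom n = 0 :=
  Rep.hom_ext <| Representation.IntertwiningMap.ext <| LinearMap.ext fun z =>
    Subtype.ext (bdry_bdry z.2)

/-- The augmentation as a homomorphism of representations. -/
def augmentationHom : chainRep 0 ⟶ trivialRep :=
  Rep.ofHom (LinearMap.intertwiningMap_of_isIntertwiningMap _ _
    (augmentation ∘ₗ (chains 0).subtype) fun _ z => augmentation_translate _ z.1)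

lemma boundaryHom_augmentationHom : boundaryHom 0 ≫ augmentationHom = 0 :=
  Rep.hom_ext <| Representation.IntertwiningMap.ext <| LinearMap.ext fun z =>
    augmentation_bdry z.2

lemma epi_augmentationHom : Epi augmentationHom :=
  (Rep.epi_iff_surjective _).2 fun k => ⟨⟨.single ([], 1) k, single_mem_chains .nil 1 k⟩,
    augmentation_single ..⟩

/-- The complex of chains. -/
abbrev chainComplex : ChainComplex (Rep ℤ (commutator ThompsonF)) ℕ :=
  ChainComplex.of chainRep boundaryHom boundaryHom_comp

lemma chainComplex_d (n : ℕ) : chainComplex.d (n + 1) n = boundaryHom n := ChainComplex.of_d ..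

lemma coe_chainComplex_d_hom (n : ℕ) (z : chains (n + 1)) :
    ((chainComplex.d (n + 1) n).hom z : chains n) = bdry z.1 :=
  congrArg (fun f => ((Rep.Hom.hom f z : chains n) : Chain)) (chainComplex_d n)

/-- The augmentation as a morphism of complexes. -/
def resolutionMap : chainComplex ⟶ (ChainComplex.single₀ _).obj trivialRep :=
  (chainComplex.toSingle₀Equiv trivialRep).symm
    ⟨augmentationHom, by rw [chainComplex_d, boundaryHom_augmentationHom]⟩

lemma resolutionMap_f_zero : resolutionMap.f 0 = augmentationHom :=
  congrArg Subtype.val ((chainComplex.toSingle₀Equiv trivialRep).apply_symm_apply _)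

lemma exact_chainComplex_succ (m : ℕ) : (ShortComplex.mk (chainComplex.d (m + 2) (m + 1))
    (chainComplex.d (m + 1) m) (chainComplex.d_comp_d ..)).Exact := by
  refine rep_exact_of_forall_exists fun (z : chains (m + 1)) hz => ?_
  obtain ⟨u, hu, hd⟩ := exists_bdry_eq z.2 <|
    (coe_chainComplex_d_hom m z).symm.trans (congrArg Subtype.val hz)
  exact ⟨(⟨u, hu⟩ : chains (m + 2)),
    Subtype.ext ((coe_chainComplex_d_hom (m + 1) ⟨u, hu⟩).trans hd)⟩

lemma exact_chainComplex_zero (w : chainComplex.d 1 0 ≫ resolutionMap.f 0 = 0) :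
    (ShortComplex.mk (chainComplex.d 1 0) (resolutionMap.f 0) w).Exact := by
  refine rep_exact_of_forall_exists fun (z : chains 0) hz => ?_
  have hz' : augmentationHom.hom z = 0 := (congrArg (·.hom z) resolutionMap_f_zero).symm.trans hz
  obtain ⟨u, hu, hd⟩ := exists_bdry_eq_of_augmentation_eq_zero z.2 hz'
  exact ⟨(⟨u, hu⟩ : chains 1),
    Subtype.ext ((coe_chainComplex_d_hom 0 ⟨u, hu⟩).trans hd)⟩

lemma quasiIso_resolutionMap : QuasiIso resolutionMap where
  quasiIsoAt
    | 0 => by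
      rw [ChainComplex.quasiIsoAt₀_iff, ShortComplex.quasiIso_iff_of_zeros' _ rfl rfl rfl]
      exact ⟨exact_chainComplex_zero _,
        (congrArg Epi resolutionMap_f_zero).mpr epi_augmentationHom⟩
    | m + 1 => by
      rw [quasiIsoAt_iff_exactAt' (hL := ChainComplex.exactAt_succ_single_obj ..),
        HomologicalComplex.exactAt_iff' _ (m + 2) (m + 1) m (by simp) (by simp)]
      exact exact_chainComplex_succ m

/-- The free resolution of the trivial representation by the chains. -/
def resolution : ProjectiveResolution trivialRep where
  complex := chainComplex
  projective n := inferInstanceAs (Projective (chainRep n))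
  π := resolutionMap
  quasiIso := quasiIso_resolutionMap

/-! ### Cochains of the resolution -/

open PlaneFunction NodalBimodule

/-- The dual of `bdryCell`, for cochains whose value on the cell `(l, κ)` depends on `κ` only
through its degree. -/
def coboundary (φ : List ℤ → ℤ → ℤ) : List ℤ → ℤ → ℤ
  | [], _ => 0
  | a :: l, c => φ l c - φ (l.map (· - 1)) (c + 1) - coboundary (fun s => φ (a :: s)) l c

/-- The Hochschild `n`-cochain attached to a family `ψ` of functions of a word of length `n` and a
degree. At `h₁, …, hₙ` and `(a, b)` it evaluates `ψ a` at the word which follows `a + d` with gaps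
`h₁ + 2, …, hₙ + 2`, in the degree `c` for which `b + c` is minus the last letter. -/
def toCochain : (n : ℕ) → ℤ → (ℤ → List ℤ → ℤ → ℤ) → Cochains PlaneFunction n
  | 0, d, ψ => fun a b => ψ a [] (-b - (a + d))
  | n + 1, d, ψ => fun h => toCochain n (d + h + 2) fun a s => ψ a ((a + d + h + 2) :: s)

lemma toCochain_sub (n : ℕ) (d : ℤ) (ψ χ : ℤ → List ℤ → ℤ → ℤ) :
    toCochain n d (ψ - χ) = toCochain n d ψ - toCochain n d χ := by
  induction n generalizing d ψ χ with
  | zero => rfl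
  | succ n ih => exact funext fun h => ih ..

lemma toCochain_map_sub_one (n : ℕ) (d : ℤ) (ψ : ℤ → List ℤ → ℤ → ℤ) :
    toCochain n d (fun a s c => ψ a (s.map (· - 1)) (c + 1)) = toCochain n (d - 1) ψ := by
  induction n generalizing d ψ with
  | zero =>
    refine funext₂ fun a b => congrArg (ψ a []) ?_
    ring
  | succ n ih =>
    funext h
    refine (ih _ fun a s => ψ a ((a + d + h + 2 - 1) :: s)).trans ?_
    simp only [toCochain]
    ring_nf

lemma L_toCochain (n h : ℕ) (d : ℤ) (ψ : ℤ → List ℤ → ℤ → ℤ) :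
    (bimodule.cochains n).L h (toCochain n d ψ) =
      toCochain n (d + h + 1) (fun a => ψ (a + h + 1)) -
        toCochain n (d + h + 2) (fun a => ψ (a + h + 2)) := by
  induction n generalizing d ψ with
  | zero =>
    funext a b
    refine (bimodule_L_apply h _ a b).trans ?_
    refine congrArg₂ (ψ (a + h + 1) [] · - ψ (a + h + 2) [] ·) ?_ ?_ <;> ring
  | succ n ih =>
    funext g
    refine (ih ..).trans (congrArg₂ (· - ·) ?_ ?_) <;>
    · simp only [toCochain]
      ring_nf

lemma toCochain_coboundary_cons_cons (n : ℕ) (d : ℤ) (χ : ℤ → List ℤ → ℤ → ℤ) (p q : ℤ → ℤ) :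
    toCochain n d (fun a s => coboundary (χ a) (p a :: q a :: s)) =
      toCochain n d (fun a s => χ a (q a :: s)) -
        toCochain n (d - 1) (fun a s => χ a ((q a - 1) :: s)) -
        toCochain n d (fun a s => coboundary (fun s => χ a (p a :: s)) (q a :: s)) := by
  rw [← toCochain_map_sub_one, ← toCochain_sub, ← toCochain_sub]
  rfl

lemma R_toCochain (n h : ℕ) (d : ℤ) (ψ : ℤ → List ℤ → ℤ → ℤ) :
    (bimodule.cochains n).R h (toCochain n d ψ) =
      -toCochain n (d + h + 2) fun a s => coboundary (ψ a) ((a + d + h + 2) :: s) := by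
  induction n generalizing h d ψ with
  | zero =>
    funext a b
    refine (bimodule_R_apply h _ a b).trans ?_
    change ψ a [] (-(b + h + 1) - (a + d)) - ψ a [] (-(b + h + 2) - (a + d)) =
      -(ψ a [] _ - ψ a [] _ - 0)
    ring_nf
  | succ n ih =>
    funext g
    refine (shift_R_apply ..).trans ?_
    change _ = -toCochain n _ _
    rw [toCochain_coboundary_cons_cons]
    have hg := ih g (d + h + 2) fun a s => ψ a ((a + d + h + 2) :: s)
    simp only [toCochain, hg]
    push_cast
    ring_nf
    abel

lemma δ_toCochain (n : ℕ) (φ : List ℤ → ℤ → ℤ) :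
    (bimodule.cochains n).δ (toCochain n 0 fun a s => φ (a :: s)) =
      -toCochain (n + 1) 0 fun a s => coboundary φ (a :: s) := by
  funext h
  rw [δ_apply, L_toCochain, R_toCochain]
  change _ = -toCochain n _ _
  rw [toCochain_coboundary_cons_cons]
  simp only [zero_add, add_zero, add_sub_assoc, show (2 : ℤ) - 1 = 1 from rfl]
  abel

lemma toCochain_eq_zero_iff (n : ℕ) (d : ℤ) (ψ : ℤ → List ℤ → ℤ → ℤ) :
    toCochain n d ψ = 0 ↔ ∀ a s c, Gapped ((a + d) :: s) → s.length = n → ψ a s c = 0 := by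
  induction n generalizing d ψ with
  | zero =>
    refine ⟨fun h a s c _ hs => ?_, fun h => funext₂ fun a b => ?_⟩
    · obtain rfl := List.length_eq_zero_iff.1 hs
      have := congrFun₂ h a (-c - (a + d))
      change ψ a [] (-(-c - (a + d)) - (a + d)) = 0 at this
      rwa [neg_sub, sub_neg_eq_add, add_sub_cancel_left] at this
    · exact h a [] _ (List.pairwise_singleton ..) rfl
  | succ n ih =>
    refine funext_iff.trans ((forall_congr' fun h : ℕ => ih ..).trans ?_)
    constructor
    · rintro H a (_ | ⟨b, s⟩) c hgap hlen
      · simp at hlen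
      obtain ⟨hb, hs⟩ := gapped_cons.1 hgap
      obtain ⟨h, hh⟩ := Int.eq_ofNat_of_zero_le (a := b - (a + d + 2)) <| by
        have := hb b List.mem_cons_self
        omega
      obtain rfl : b = a + d + h + 2 := by omega
      refine H h a s c ?_ (Nat.succ_injective hlen)
      rwa [← add_assoc, ← add_assoc]
    · intro H h a s c hgap hlen
      rw [← add_assoc, ← add_assoc] at hgap
      refine H a _ c (gapped_cons.2 ⟨fun b hb => ?_, hgap⟩) (congrArg (· + 1) hlen)
      have := hgap.head_le b hb
      omega

lemma exists_toCochain_eq (n : ℕ) (d : ℤ) (X : Cochains PlaneFunction n) :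
    ∃ ψ, toCochain n d ψ = X := by
  induction n generalizing d with
  | zero =>
    refine ⟨fun a _ c => X a (-c - (a + d)), funext₂ fun a b => ?_⟩
    exact congrArg (X a) (by ring)
  | succ n ih =>
    choose ψ hψ using fun h : ℕ => ih (d + h + 2) (X h)
    refine ⟨fun a s => ψ (s.headI - a - d - 2).toNat a s.tail, funext fun h => ?_⟩
    rw [← hψ h]
    simp only [toCochain, List.headI_cons, List.tail_cons]
    ring_nf
    simp

/-! ### Cohomology -/

/-- The cochain with given values on the representatives of the cells. -/
def toHom (n : ℕ) : (List ℤ → ℤ → ℤ) →ₗ[ℤ] (chainRep n ⟶ trivialRep) where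
  toFun φ := Rep.ofHom (chainLift (Representation.trivial ℤ _ ℤ) φ n)
  map_add' φ χ := Rep.hom_ext <| intertwiningMap_ext fun _ hl hn c =>
    (chainLift_cell _ _ hl hn c).trans <| .symm <|
      congrArg₂ (· + ·) (chainLift_cell _ φ hl hn c) (chainLift_cell _ χ hl hn c)
  map_smul' k φ := Rep.hom_ext <| intertwiningMap_ext fun _ hl hn c =>
    (chainLift_cell _ _ hl hn c).trans <| .symm <|
      congrArg (k • ·) (chainLift_cell _ φ hl hn c)

lemma toHom_cell {n : ℕ} (φ : List ℤ → ℤ → ℤ) {l : List ℤ} (hl : Gapped l) (hn : l.length = n)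
    (c : ℤ) : (toHom n φ).hom (cell n l c) = φ l c :=
  chainLift_cell _ _ hl hn c

lemma toHom_surjective (n : ℕ) : Function.Surjective (toHom n) := fun f =>
  ⟨fun l c => f.hom (cell n l c), Rep.hom_ext <| intertwiningMap_ext fun _ hl hn c =>
    toHom_cell _ hl hn c⟩

lemma toHom_eq_zero_iff {n : ℕ} {φ : List ℤ → ℤ → ℤ} :
    toHom n φ = 0 ↔ ∀ l, Gapped l → l.length = n → ∀ c, φ l c = 0 := by
  refine ⟨fun h l hl hn c => ?_, fun h => Rep.hom_ext <| intertwiningMap_ext fun l hl hn c => ?_⟩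
  · rw [← toHom_cell φ hl hn c, h]
    rfl
  · exact (toHom_cell φ hl hn c).trans (h l hl hn c)

lemma extend_cone (φ : List ℤ → ℤ → ℤ) (a : ℤ) (z : Chain) :
    extend (Representation.trivial ℤ _ ℤ) φ (cone a z) =
      extend (Representation.trivial ℤ _ ℤ) (fun s => φ (a :: s)) z := by
  suffices extend (Representation.trivial ℤ _ ℤ) φ ∘ₗ cone a =
    extend (Representation.trivial ℤ _ ℤ) fun s => φ (a :: s) from LinearMap.congr_fun this z
  ext ⟨l, κ⟩
  simp only [LinearMap.comp_apply, Finsupp.lsingle_apply, cone_single, extend_single]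

lemma extend_bdryCell (φ : List ℤ → ℤ → ℤ) (l : List ℤ) (κ : Y) :
    extend (Representation.trivial ℤ _ ℤ) φ (bdryCell l κ) = coboundary φ l (deg κ) := by
  induction l generalizing φ with
  | nil => exact map_zero _
  | cons a l ih =>
    simp only [bdryCell, map_sub, extend_cone, ih, extend_single, deg_mul, deg_gen, coboundary,
      Representation.trivial_apply, add_comm (1 : ℤ)]

lemma boundaryHom_toHom (n : ℕ) (φ : List ℤ → ℤ → ℤ) :
    boundaryHom n ≫ toHom n φ = toHom (n + 1) (coboundary φ) :=
  Rep.hom_ext <| intertwiningMap_ext fun l hl hn c => by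
    refine Eq.trans ?_ (toHom_cell _ hl hn c).symm
    change extend _ φ (bdry (cell (n + 1) l c).1) = _
    rw [coe_cell hl hn, bdry_single, one_smul, extend_bdryCell, deg_zpow, deg_gen, mul_one]

/-- The complex of equivariant cochains of the resolution. -/
abbrev dualComplex : CochainComplex (ModuleCat ℤ) ℕ :=
  resolution.complex.linearYonedaObj ℤ trivialRep

lemma dualComplex_d_apply (n : ℕ) (f : chainRep n ⟶ trivialRep) :
    dualComplex.d n (n + 1) f = boundaryHom n ≫ f :=
  congrArg (· ≫ f) (chainComplex_d n)

/-- The Hochschild cochain attached to an equivariant cochain of positive degree. -/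
def toHochschild (n : ℕ) : (List ℤ → ℤ → ℤ) →ₗ[ℤ] Cochains PlaneFunction n :=
  (AddMonoidHom.ofMapSub (fun φ => toCochain n 0 fun a s => φ (a :: s)) fun _ _ =>
    toCochain_sub ..).toIntLinearMap

lemma toHochschild_surjective (n : ℕ) : Function.Surjective (toHochschild n) := fun X => by
  obtain ⟨ψ, rfl⟩ := exists_toCochain_eq n 0 X
  exact ⟨fun l => ψ l.headI l.tail, rfl⟩

lemma δ_toHochschild (n : ℕ) (φ : List ℤ → ℤ → ℤ) :
    (bimodule.cochains n).δ (toHochschild n φ) = -toHochschild (n + 1) (coboundary φ) :=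
  δ_toCochain n φ

lemma toHochschild_eq_zero_iff (n : ℕ) (φ : List ℤ → ℤ → ℤ) :
    toHochschild n φ = 0 ↔ toHom (n + 1) φ = 0 := by
  refine (toCochain_eq_zero_iff ..).trans (Iff.trans ?_ toHom_eq_zero_iff.symm)
  simp only [add_zero]
  refine ⟨fun h l hl hn c => ?_, fun h a s c hl hn => h _ hl (congrArg (· + 1) hn) c⟩
  obtain ⟨a, s, rfl⟩ := List.exists_cons_of_length_eq_add_one hn
  exact h a s c hl (Nat.succ_injective hn)

lemma toHochschild_eq_iff (n : ℕ) (φ χ : List ℤ → ℤ → ℤ) :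
    toHochschild n φ = toHochschild n χ ↔ toHom (n + 1) φ = toHom (n + 1) χ := by
  rw [← sub_eq_zero, ← map_sub, toHochschild_eq_zero_iff, map_sub, sub_eq_zero]

lemma toHochschild_mem_range_δ_iff (n : ℕ) (φ : List ℤ → ℤ → ℤ) :
    toHochschild (n + 1) φ ∈ LinearMap.range (bimodule.cochains n).δ ↔
      ∃ f : chainRep (n + 1) ⟶ trivialRep, boundaryHom (n + 1) ≫ f = toHom (n + 2) φ := by
  constructor
  · rintro ⟨m, hm⟩
    obtain ⟨χ, hχ⟩ := toHochschild_surjective n (-m)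
    refine ⟨toHom (n + 1) χ, ?_⟩
    rw [boundaryHom_toHom, ← toHochschild_eq_iff, ← hm, ← neg_eq_iff_eq_neg.2 (δ_toHochschild n χ),
      hχ, map_neg, neg_neg]
  · rintro ⟨f, hf⟩
    obtain ⟨χ, rfl⟩ := toHom_surjective (n + 1) f
    rw [boundaryHom_toHom, ← toHochschild_eq_iff] at hf
    exact ⟨-toHochschild n χ, (map_neg _ _).trans <| neg_eq_iff_eq_neg.2 <|
      (δ_toHochschild n χ).trans (congrArg Neg.neg hf)⟩

lemma toHochschild_mem_ker_δ_iff (n : ℕ) (φ : List ℤ → ℤ → ℤ) :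
    toHochschild n φ ∈ LinearMap.ker (bimodule.cochains n).δ ↔
      boundaryHom (n + 1) ≫ toHom (n + 1) φ = 0 := by
  rw [LinearMap.mem_ker, δ_toHochschild, boundaryHom_toHom]
  exact neg_eq_zero.trans (toHochschild_eq_zero_iff ..)

lemma nonempty_homology_dualComplex_equiv (n : ℕ) :
    Nonempty (dualComplex.homology (n + 2) ≃ₗ[ℤ] (bimodule.cochains n).H1) := by
  refine (nonempty_homology_equiv (S := dualComplex.sc' (n + 1) (n + 2) (n + 3))
    (toHom_surjective (n + 2)) (toHochschild_surjective (n + 1)) (fun φ => ?_) fun φ => ?_).map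
    ((ShortComplex.homologyMapIso (dualComplex.isoSc' (n + 1) (n + 2) (n + 3)
      (by simp) (by simp))).toLinearEquiv ≪≫ₗ ·)
  · exact (toHochschild_mem_ker_δ_iff (n + 1) φ).trans
      (Eq.congr_left (dualComplex_d_apply (n + 2) _)).symm
  · exact (toHochschild_mem_range_δ_iff n φ).trans <|
      exists_congr fun f => (Eq.congr_left (dualComplex_d_apply (n + 1) f)).symm

lemma subsingleton_homology_dualComplex_one : Subsingleton (dualComplex.homology 1) := by
  refine ModuleCat.subsingleton_of_isZero <| HomologicalComplex.ExactAt.isZero_homology <|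
    (HomologicalComplex.exactAt_iff' _ 0 1 2 (by simp) (by simp)).2 <|
    (ShortComplex.moduleCat_exact_iff _).2 fun (f : chainRep 1 ⟶ trivialRep) hf => ?_
  obtain ⟨φ, rfl⟩ := toHom_surjective 1 f
  obtain ⟨u, hu⟩ := exists_eq_sub_of_mem_ker_δ <|
    (toHochschild_mem_ker_δ_iff 0 φ).2 ((dualComplex_d_apply 1 _).symm.trans hf)
  refine ⟨toHom 0 fun _ => u, (dualComplex_d_apply 0 _).trans ?_⟩
  refine (boundaryHom_toHom ..).trans ((toHochschild_eq_iff 0 _ _).1 (funext₂ fun a b => ?_))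
  refine Eq.trans ?_ (hu a b).symm
  change u (-b - (a + 0)) - u (-b - (a + 0) + 1) - 0 = _
  ring_nf

lemma nonempty_groupCohomology_equiv (n : ℕ) :
    Nonempty (groupCohomology trivialRep (n + 2) ≃ₗ[ℤ] (bimodule.cochains n).H1) :=
  (nonempty_homology_dualComplex_equiv n).map
    ((groupCohomologyIso trivialRep (n + 2) resolution).toLinearEquiv ≪≫ₗ ·)

lemma subsingleton_groupCohomology_one : Subsingleton (groupCohomology trivialRep 1) :=
  (groupCohomologyIso trivialRep 1 resolution).toLinearEquiv.toEquiv.subsingleton_congr.2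
    subsingleton_homology_dualComplex_one

end

end ThompsonF

/-- The integral group cohomology of the commutator subgroup `F′` of Thompson's group `F`
is infinite cyclic in every even degree and trivial in every odd degree. -/
theorem thompsonF_commutator_cohomology (n : ℕ) :
    (Even n →
      Nonempty ((groupCohomology (Rep.trivial ℤ (commutator ThompsonF) ℤ) n) ≃ₗ[ℤ] ℤ)) ∧
    (Odd n → Subsingleton (groupCohomology (Rep.trivial ℤ (commutator ThompsonF) ℤ) n)) := by
  constructor
  · rintro ⟨m, rfl⟩
    obtain _ | k := m
    · exact ⟨(groupCohomology.H0IsoOfIsTrivial ThompsonF.trivialRep).toLinearEquiv⟩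
    · obtain ⟨e⟩ := ThompsonF.nonempty_groupCohomology_equiv (2 * k)
      obtain ⟨e'⟩ := PlaneFunction.nonempty_H1_cochains_equiv k
      rw [show k + 1 + (k + 1) = 2 * k + 2 by ring]
      exact ⟨e ≪≫ₗ e'⟩
  · rintro ⟨_ | k, rfl⟩
    · exact ThompsonF.subsingleton_groupCohomology_one
    · obtain ⟨e⟩ := ThompsonF.nonempty_groupCohomology_equiv (2 * k + 1)
      have := PlaneFunction.subsingleton_H1_cochains k
      exact e.subsingleton
end

section
/- Let R = FreeAlgebra ℤ (Fin 2) be the ring of noncommuting polynomials over ℤ in two variables v, e (the images of the two generators), and set w := v·v − v and z := v·e − e·v. Then: (i) the ℤ-algebra homomorphism FreeAlgebra ℤ (Fin 3) → R sending the three generators to e, w, z respectively is injective (so the subring S generated by e, w, z is itself free on these three elements); and (ii) R decomposes as an internal direct sum of ℤ-modules R = S ⊕ S·v, where S is the range of this homomorphism and S·v = { s·v : s ∈ S }: every element of R is uniquely of the form s + s'·v with s, s' ∈ S. -/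
/-!
Since `v * v = w + v` and `v * e = z + e * v`, the left `S`-module `S + S * v` contains `1` and is
stable under right multiplication by `v` and `e`, so it is all of `R`. Reading these relations as
formulas for right multiplication in the coordinates `(s, s')` of `s + s' * v` gives a
representation of `R` by `2 × 2` matrices over the free algebra on three generators. It exists
because `R` is free, and its first row recovers both coordinates, which proves that the three
generators of `S` are free and that the decomposition is unique.
-/

noncomputable section

/-- `v`, the degree-0 generator of `R = FreeAlgebra ℤ (Fin 2)`. -/
def v : FreeAlgebra ℤ (Fin 2) := FreeAlgebra.ι ℤ 0

/-- `e`, the degree-1 generator of `R = FreeAlgebra ℤ (Fin 2)`. -/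
def e : FreeAlgebra ℤ (Fin 2) := FreeAlgebra.ι ℤ 1

/-- `w = v·v − v`. -/
def w : FreeAlgebra ℤ (Fin 2) := v * v - v

/-- `z = [v,e] = v·e − e·v`. -/
def z : FreeAlgebra ℤ (Fin 2) := v * e - e * v

/-- The ℤ-algebra homomorphism from the free algebra on three generators sending the
generators to `e`, `w`, `z` respectively; its range is the subring `S`. -/
def toEWZ : FreeAlgebra ℤ (Fin 3) →ₐ[ℤ] FreeAlgebra ℤ (Fin 2) :=
  FreeAlgebra.lift ℤ ![e, w, z]

section RightMultiplication

variable {k S A : Type*} [CommSemiring k] [Semiring S] [Semiring A] [Algebra k A] [SMul k S]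
  [Module S A] [IsScalarTower k S A] [IsScalarTower S A A]

theorem mul_mem_span_of_forall_mul_mem {G : Set A} {a : A}
    (hG : ∀ g ∈ G, g * a ∈ Submodule.span S G) {m : A} (hm : m ∈ Submodule.span S G) :
    m * a ∈ Submodule.span S G := by
  induction hm using Submodule.span_induction with
  | mem g hg => exact hG g hg
  | zero => simp
  | add m m' _ _ hm hm' => simpa only [add_mul] using add_mem hm hm'
  | smul s m _ hm => simpa only [smul_mul_assoc] using Submodule.smul_mem _ s hm

theorem span_eq_top_of_forall_mul_mem {G X : Set A} (hX : Algebra.adjoin k X = ⊤)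
    (one_mem : 1 ∈ Submodule.span S G)
    (mul_mem : ∀ x ∈ X, ∀ g ∈ G, g * x ∈ Submodule.span S G) :
    Submodule.span S G = ⊤ := by
  suffices mul_mem' : ∀ a : A, ∀ m ∈ Submodule.span S G, m * a ∈ Submodule.span S G from
    Submodule.eq_top_iff'.2 fun a ↦ by simpa only [one_mul] using mul_mem' a 1 one_mem
  intro a
  have ha : a ∈ Algebra.adjoin k X := hX ▸ Algebra.mem_top
  induction ha using Algebra.adjoin_induction with
  | mem x hx => exact fun _ ↦ mul_mem_span_of_forall_mul_mem (mul_mem x hx)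
  | algebraMap r =>
    intro m hm
    rw [← Algebra.commutes, ← Algebra.smul_def]
    exact Submodule.smul_of_tower_mem _ r hm
  | add a b _ _ ha hb =>
    intro m hm
    simpa only [mul_add] using add_mem (ha m hm) (hb m hm)
  | mul a b _ _ ha hb =>
    intro m hm
    simpa only [mul_assoc] using hb _ (ha m hm)

end RightMultiplication

theorem mem_span_one_pair_iff {k A : Type*} [CommSemiring k] [Semiring A] [Algebra k A]
    {S : Subalgebra k A} {x a : A} :
    a ∈ Submodule.span S {1, x} ↔ ∃ s s' : A, s ∈ S ∧ s' ∈ S ∧ a = s + s' * x := by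
  simp [Submodule.mem_span_pair, Subalgebra.smul_def, eq_comm]

theorem row_eq_single_of_forall_ι {k X n : Type*} [CommSemiring k] [Fintype n] [DecidableEq n]
    (ψ : FreeAlgebra k X →ₐ[k] Matrix n n (FreeAlgebra k X)) (i : n)
    (hψ : ∀ x, ψ (FreeAlgebra.ι k x) i = Pi.single i (FreeAlgebra.ι k x))
    (f : FreeAlgebra k X) : ψ f i = Pi.single i f := by
  induction f using FreeAlgebra.induction with
  | grade0 r =>
    ext j
    simp [Matrix.algebraMap_matrix_apply, Pi.single_apply, eq_comm]
  | grade1 x => exact hψ x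
  | mul f g hf hg =>
    rw [map_mul, Matrix.mul_apply_eq_vecMul, hf, Matrix.single_vecMul]
    simp [Matrix.row, hg, ← Pi.single_smul]
  | add f g hf hg =>
    rw [map_add, Pi.single_add, ← hf, ← hg]
    rfl

section Decomposition

variable (k : Type*) [CommRing k]

/-- The homomorphism from the free algebra on three generators to a `k`-algebra determined by
`y`, `x² - x` and `[x, y]`; `toEWZ` is the case `k = ℤ` with `x = v` and `y = e`. -/
def ewzHom {A : Type*} [Ring A] [Algebra k A] (x y : A) : FreeAlgebra k (Fin 3) →ₐ[k] A :=
  FreeAlgebra.lift k ![y, x * x - x, x * y - y * x]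

theorem span_range_ewzHom_eq_top {A : Type*} [Ring A] [Algebra k A] {x y : A}
    (hxy : Algebra.adjoin k {x, y} = ⊤) :
    Submodule.span (ewzHom k x y).range {1, x} = ⊤ := by
  have mem_range (i : Fin 3) : ![y, x * x - x, x * y - y * x] i ∈ (ewzHom k x y).range :=
    ⟨FreeAlgebra.ι k i, FreeAlgebra.lift_ι_apply _ i⟩
  have one_mem_span : 1 ∈ Submodule.span (ewzHom k x y).range {1, x} :=
    Submodule.subset_span (by simp)
  have x_mem_span : x ∈ Submodule.span (ewzHom k x y).range {1, x} :=
    Submodule.subset_span (by simp)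
  have x_mul_x_mem_span : x * x ∈ Submodule.span (ewzHom k x y).range {1, x} :=
    mem_span_one_pair_iff.2 ⟨x * x - x, 1, mem_range 1, one_mem _, by simp⟩
  have y_mem_span : y ∈ Submodule.span (ewzHom k x y).range {1, x} :=
    mem_span_one_pair_iff.2 ⟨y, 0, mem_range 0, zero_mem _, by simp⟩
  have x_mul_y_mem_span : x * y ∈ Submodule.span (ewzHom k x y).range {1, x} :=
    mem_span_one_pair_iff.2 ⟨x * y - y * x, y, mem_range 2, mem_range 0, by simp⟩
  refine span_eq_top_of_forall_mul_mem hxy one_mem_span ?_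
  rintro _ (rfl | rfl) _ (rfl | rfl) <;> simpa only [one_mul]

/-- Right multiplication on `S ⊕ S * v` in the basis `1, v`, where `S` is the free algebra on
`e, w, z`: the rows of the image of `r` are the coordinates of `r` and of `v * r`. -/
def rightMulMatrix :
    FreeAlgebra k (Fin 2) →ₐ[k] Matrix (Fin 2) (Fin 2) (FreeAlgebra k (Fin 3)) :=
  FreeAlgebra.lift k
    ![!![0, 1; FreeAlgebra.ι k 1, 1],
      !![FreeAlgebra.ι k 0, 0; FreeAlgebra.ι k 2, FreeAlgebra.ι k 0]]

local notation "vₖ" => FreeAlgebra.ι k (0 : Fin 2)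
local notation "eₖ" => FreeAlgebra.ι k (1 : Fin 2)

theorem adjoin_pair_ι_eq_top : Algebra.adjoin k {vₖ, eₖ} = ⊤ := by
  rw [← FreeAlgebra.adjoin_range_ι]
  congr 1
  ext a
  simp [Fin.exists_fin_two, eq_comm]

theorem rightMulMatrix_ewzHom_row_zero (f : FreeAlgebra k (Fin 3)) :
    rightMulMatrix k (ewzHom k vₖ eₖ f) 0 = Pi.single 0 f := by
  refine row_eq_single_of_forall_ι ((rightMulMatrix k).comp (ewzHom k vₖ eₖ)) 0 (fun i ↦ ?_) f
  ext j
  fin_cases i <;> fin_cases j <;> simp [rightMulMatrix, ewzHom]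

theorem rightMulMatrix_ewzHom_add_mul_row_zero (f g : FreeAlgebra k (Fin 3)) :
    rightMulMatrix k (ewzHom k vₖ eₖ f + ewzHom k vₖ eₖ g * vₖ) 0 = ![f, g] := by
  have row_v : rightMulMatrix k vₖ 0 = ![0, 1] := by
    rw [rightMulMatrix, FreeAlgebra.lift_ι_apply]
    rfl
  calc
    _ = rightMulMatrix k (ewzHom k vₖ eₖ f) 0 +
        Matrix.vecMul (rightMulMatrix k (ewzHom k vₖ eₖ g) 0) (rightMulMatrix k vₖ) := by
      rw [map_add, map_mul, ← Matrix.mul_apply_eq_vecMul]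
      rfl
    _ = Pi.single 0 f + g • rightMulMatrix k vₖ 0 := by
      rw [rightMulMatrix_ewzHom_row_zero, rightMulMatrix_ewzHom_row_zero, Matrix.single_vecMul]
      rfl
    _ = ![f, g] := by
      ext j
      fin_cases j <;> simp [row_v]

theorem ewzHom_ι_injective : Function.Injective (ewzHom k vₖ eₖ) := by
  intro f g h
  apply Pi.single_injective (M := fun _ : Fin 2 ↦ FreeAlgebra k (Fin 3)) 0
  rw [← rightMulMatrix_ewzHom_row_zero, h, rightMulMatrix_ewzHom_row_zero]

theorem freeAlgebra_S_Sv_decomposition_general :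
    Function.Injective (ewzHom k vₖ eₖ) ∧
    (∀ r : FreeAlgebra k (Fin 2), ∃ s s' : FreeAlgebra k (Fin 2),
      s ∈ (ewzHom k vₖ eₖ).range ∧ s' ∈ (ewzHom k vₖ eₖ).range ∧ r = s + s' * vₖ) ∧
    (∀ s s' : FreeAlgebra k (Fin 2), s ∈ (ewzHom k vₖ eₖ).range →
      s' ∈ (ewzHom k vₖ eₖ).range → s + s' * vₖ = 0 → s = 0 ∧ s' = 0) := by
  refine ⟨ewzHom_ι_injective k, fun r ↦ ?_, ?_⟩
  · rw [← mem_span_one_pair_iff, span_range_ewzHom_eq_top k (adjoin_pair_ι_eq_top k)]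
    exact Submodule.mem_top
  · rintro _ _ ⟨f, rfl⟩ ⟨g, rfl⟩ h
    have hfg : ![f, g] = 0 := by
      rw [← rightMulMatrix_ewzHom_add_mul_row_zero]
      exact congrFun ((congrArg (rightMulMatrix k) h).trans (map_zero _)) 0
    have hf : f = 0 := congrFun hfg 0
    have hg : g = 0 := congrFun hfg 1
    simp [hf, hg]

end Decomposition

/-- The subring `S` of `R` generated by `e`, `w = v² − v` and `z = ve − ev` is free on these
three elements, and `R` decomposes as the internal direct sum `R = S ⊕ S·v`: every element
of `R` is uniquely of the form `s + s'·v` with `s, s' ∈ S`. -/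
theorem freeAlgebra_S_Sv_decomposition :
    Function.Injective toEWZ ∧
    (∀ r : FreeAlgebra ℤ (Fin 2), ∃ s s' : FreeAlgebra ℤ (Fin 2),
      s ∈ toEWZ.range ∧ s' ∈ toEWZ.range ∧ r = s + s' * v) ∧
    (∀ s s' : FreeAlgebra ℤ (Fin 2), s ∈ toEWZ.range → s' ∈ toEWZ.range →
      s + s' * v = 0 → s = 0 ∧ s' = 0) :=
  freeAlgebra_S_Sv_decomposition_general ℤ
end
end
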